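/- arXiv:math/0501179 — 2 statements merged into one kernel-verified Lean document; each statement's English description precedes it below -/
import Mathlib

section
/- For every i ≥ 0, dim_k Tor_i^{E ⊗_k E^op}(k, E) = binom(n+i−1, i); equivalently, the Hilbert series Σ_{i≥0} dim_k Tor_i^{E⊗_k E^op}(k,E)·t^i of the Hochschild homology of E with coefficients in k equals 1/(1−t)^n, the Hilbert series of the commutative polynomial ring in n variables. -/
/-!
**Statement 11**: for the exterior algebra `E` on `n` generators over a field `k`,
`dim_k Tor_i^{E ⊗ E^op}(k, E) = binom(n+i-1, i)` for all `i ≥ 0`; equivalently the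
Hilbert series of the Hochschild homology of `E` with coefficients in `k` is
`1/(1-t)^n`, the Hilbert series of the polynomial ring in `n` variables.

We realize `Tor_i^{E ⊗ E^op}(k, E)` concretely as the `i`-th homology of the complex
`k ⊗_{E ⊗ E^op} C`, where `C` (`C_i = E^{⊗(i+2)}`) is the acyclic Hochschild complex,
a free `E ⊗ E^op`-resolution of `E`; this complex has terms `E^{⊗ i}` and the
differential `hDelta` below, built from the augmentation `ε : E → k`.
-/
open TensorProduct

noncomputable section

section HochschildHomology

variable (k : Type) [Field k] (A : Type) [Ring A] [Algebra k A]
variable (ε : A →ₐ[k] k)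

/-- The terms `A^{⊗ i}` of the complex `k ⊗_{A ⊗ A^op} C` obtained from the acyclic
Hochschild complex `C` (the free `A ⊗ A^op`-resolution `C_i = A^{⊗ (i+2)}` of `A`)
by tensoring with `k` over `A ⊗ A^op`; its homology computes
`Tor^{A ⊗ A^op}(k, A)`, the Hochschild homology of `A` with coefficients in `k`. -/
def hW : ℕ → ModuleCat k
  | 0 => ModuleCat.of k k
  | n + 1 => ModuleCat.of k (A ⊗[k] (hW n))

/-- Applying the augmentation `ε` to the leftmost tensor factor. -/
def hEps (n : ℕ) : (A ⊗[k] (hW k A n : Type)) →ₗ[k] (hW k A n : Type) :=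
  (TensorProduct.lid k (hW k A n : Type)).toLinearMap.comp
    (TensorProduct.map ε.toLinearMap LinearMap.id)

/-- The differential
`δ(a₁ ⊗ ⋯ ⊗ a_i) = ε(a₁)·(a₂ ⊗ ⋯ ⊗ a_i)
  + ∑_{j=1}^{i-1} (-1)^j a₁ ⊗ ⋯ ⊗ a_j a_{j+1} ⊗ ⋯ ⊗ a_i
  + (-1)^i ε(a_i)·(a₁ ⊗ ⋯ ⊗ a_{i-1})`
of the complex computing the Hochschild homology of `A` with coefficients in `k`,
defined by the recursion `δ(a ⊗ x) = ε(a)·x - (a·x) - a ⊗ δ(x) + a ⊗ (ε·x)`. -/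
def hDelta : ∀ n, (hW k A (n + 1) : Type) →ₗ[k] (hW k A n : Type)
  | 0 => 0
  | n + 1 =>
      (fun (f g h e : (hW k A (n + 2) : Type) →ₗ[k] (hW k A (n + 1) : Type)) =>
          f - g - h + e)
        (hEps k A ε (n + 1))
        ((TensorProduct.map (LinearMap.mul' k A) LinearMap.id).comp
          (TensorProduct.assoc k A A (hW k A n)).symm.toLinearMap)
        (TensorProduct.map LinearMap.id (hDelta n))
        (TensorProduct.map LinearMap.id (hEps k A ε n))

/-- The homology of the above complex: `H 0 = k / im(δ_1)` and for `i ≥ 1`,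
`H i = ker(δ_i) / im(δ_{i+1})`.  By the standard theory of the Hochschild
resolution, `H i ≅ Tor_i^{A ⊗ A^op}(k, A) = HH_i(A, k)`; we use this complex as
the definition of these Tor groups. -/
def hH : ℕ → ModuleCat k
  | 0 => ModuleCat.of k ((hW k A 0 : Type) ⧸ LinearMap.range (hDelta k A ε 0))
  | i + 1 => ModuleCat.of k
      ((LinearMap.ker (hDelta k A ε i)) ⧸
        (Submodule.comap (LinearMap.ker (hDelta k A ε i)).subtype
          (LinearMap.range (hDelta k A ε (i + 1)))))

end HochschildHomology

section Exterior

variable (k : Type) [Field k] (n : ℕ)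

/-- The defining relations of the exterior algebra: `e_i e_j + e_j e_i = 0` for all
`i, j` and `e_i² = 0` for all `i`; the quotient of the free algebra by the ring
congruence they generate is the quotient by the two-sided ideal they generate. -/
def ExtRel : FreeAlgebra k (Fin n) → FreeAlgebra k (Fin n) → Prop := fun a b =>
  ((∃ i j : Fin n, a = FreeAlgebra.ι k i * FreeAlgebra.ι k j +
      FreeAlgebra.ι k j * FreeAlgebra.ι k i) ∨
    (∃ i : Fin n, a = FreeAlgebra.ι k i * FreeAlgebra.ι k i)) ∧ b = 0

/-- The exterior algebra `E` on `e_1, …, e_n` over `k`: the quotient of the free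
associative `k`-algebra on `n` generators by the relations above. -/
abbrev ExtAlg := RingQuot (ExtRel k n)

/-- The augmentation `E → k` sending each generator `e_i` to `0`. -/
def extAug : ExtAlg k n →ₐ[k] k :=
  RingQuot.liftAlgHom k
    ⟨FreeAlgebra.lift k (fun _ : Fin n => (0 : k)), by
      rintro x y ⟨(⟨i, j, rfl⟩ | ⟨i, rfl⟩), rfl⟩ <;> simp⟩

end Exterior

set_option linter.unusedSimpArgs false

section BarComplex

variable {k : Type} [Field k] {A : Type} [Ring A] [Algebra k A]
variable (ε : A →ₐ[k] k)
variable {M : Type} [AddCommGroup M] [Module k M] (ρ : A →ₐ[k] Module.End k M)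
variable {M' : Type} [AddCommGroup M'] [Module k M'] (ρ' : A →ₐ[k] Module.End k M')
variable {M'' : Type} [AddCommGroup M''] [Module k M''] (ρ'' : A →ₐ[k] Module.End k M'')
variable {P : Type} [AddCommGroup P] [Module k P]

variable (k A M) in
/-- Terms `A^{⊗ n} ⊗ M` of the bar complex with coefficients in `M`. -/
def bW : ℕ → ModuleCat k
  | 0 => ModuleCat.of k M
  | n + 1 => ModuleCat.of k (A ⊗[k] (bW n))

/-- The inclusion of the coefficients (an isomorphism). -/
def bIn : M →ₗ[k] (bW k A M 0 : Type) := LinearMap.id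

/-- The inverse of `bIn`. -/
def bOut : (bW k A M 0 : Type) →ₗ[k] M := LinearMap.id

@[simp] theorem bOut_bIn (x : M) : bOut (A := A) (k := k) (bIn (A := A) (k := k) x) = x := rfl
@[simp] theorem bIn_bOut (x : (bW k A M 0 : Type)) : bIn (bOut x) = x := rfl

/-- `a, x ↦ a ⊗ x`. -/
def bC (n : ℕ) : A →ₗ[k] (bW k A M n : Type) →ₗ[k] (bW k A M (n + 1) : Type) :=
  TensorProduct.mk k A (bW k A M n)

/-- Linear maps out of the next term. -/
def bLift {n : ℕ} (f : A →ₗ[k] (bW k A M n : Type) →ₗ[k] P) :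
    (bW k A M (n + 1) : Type) →ₗ[k] P := TensorProduct.lift f

@[simp] theorem bLift_bC {n : ℕ} (f : A →ₗ[k] (bW k A M n : Type) →ₗ[k] P) (a : A)
    (x : (bW k A M n : Type)) : bLift f (bC n a x) = f a x := rfl

theorem b_ind {n : ℕ} {p : (bW k A M (n + 1) : Type) → Prop} (h0 : p 0)
    (hc : ∀ a x, p (bC n a x)) (ha : ∀ x y, p x → p y → p (x + y)) (x) : p x :=
  TensorProduct.induction_on (motive := p) x h0 hc ha

theorem b_ext {n : ℕ} {f g : (bW k A M (n + 1) : Type) →ₗ[k] P}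
    (h : ∀ a x, f (bC n a x) = g (bC n a x)) (x) : f x = g x := by
  induction x using b_ind with
  | h0 => simp
  | hc a x => exact h a x
  | ha x y hx hy => simp only [map_add, smul_add, add_zero, hx, hy]

/-- Multiplication of the leftmost factor. -/
def bMul : ∀ n, A →ₗ[k] (bW k A M n : Type) →ₗ[k] (bW k A M n : Type)
  | 0 => ρ.toLinearMap
  | n + 1 => (LinearMap.mk₂ k (fun (a : A) (x : (bW k A M (n + 1) : Type)) =>
      bLift ((bC n).comp (LinearMap.mulLeft k a)) x)
      (fun a b x => by
        rw [← LinearMap.add_apply]; revert x; apply b_ext; intro c x; simp [add_mul])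
      (fun t a x => by
        rw [← LinearMap.smul_apply]; revert x; apply b_ext; intro c x; simp)
      (fun a x y => by simp) (fun t a x => by simp))

@[simp] theorem bMul_zero (a : A) (x : (bW k A M 0 : Type)) :
    bMul ρ 0 a x = bIn (ρ a (bOut x)) := rfl

@[simp] theorem bMul_succ (n : ℕ) (a b : A) (x : (bW k A M n : Type)) :
    bMul ρ (n + 1) a (bC n b x) = bC n (a * b) x := rfl

theorem bMul_assoc (n : ℕ) (a b : A) (x : (bW k A M n : Type)) :
    bMul ρ n (a * b) x = bMul ρ n a (bMul ρ n b x) := by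
  cases n with
  | zero => simp
  | succ n =>
    induction x using b_ind with
    | h0 => simp
    | hc c x => simp [mul_assoc]
    | ha x y hx hy => simp only [map_add, smul_add, add_zero, hx, hy]

variable (M) in
/-- Augmentation on the leftmost factor. -/
def bEps (n : ℕ) : (bW k A M (n + 1) : Type) →ₗ[k] (bW k A M n : Type) :=
  bLift ((LinearMap.lsmul k (bW k A M n : Type)).comp ε.toLinearMap)

@[simp] theorem bEps_bC (n : ℕ) (a : A) (x : (bW k A M n : Type)) :
    bEps ε M n (bC n a x) = ε a • x := rfl

/-- The bar differential without the augmentation term. -/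
def bB : ∀ n, (bW k A M (n + 1) : Type) →ₗ[k] (bW k A M n : Type)
  | 0 => bLift (bMul ρ 0)
  | n + 1 => bLift (bMul ρ (n + 1) - (bC n).compl₂ (bB n))

@[simp] theorem bB_zero (a : A) (x : (bW k A M 0 : Type)) :
    bB ρ 0 (bC 0 a x) = bIn (ρ a (bOut x)) := rfl

@[simp] theorem bB_succ (n : ℕ) (a : A) (x : (bW k A M (n + 1) : Type)) :
    bB ρ (n + 1) (bC (n + 1) a x) = bMul ρ (n + 1) a x - bC n a (bB ρ n x) := rfl

/-- The bar differential. -/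
def bD (n : ℕ) : (bW k A M (n + 1) : Type) →ₗ[k] (bW k A M n : Type) :=
  bEps ε M n - bB ρ n

theorem bD_apply (n : ℕ) (x) : bD ε ρ n x = bEps ε M n x - bB ρ n x := rfl

@[simp] theorem bB_bMul (n : ℕ) (a : A) (x : (bW k A M (n + 1) : Type)) :
    bB ρ n (bMul ρ (n + 1) a x) = bMul ρ n a (bB ρ n x) := by
  induction x using b_ind with
  | h0 => simp
  | ha x y hx hy => simp only [map_add, smul_add, add_zero, hx, hy]
  | hc c y =>
    cases n with
    | zero => simp
    | succ n => simp [bMul_assoc]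

@[simp] theorem bB_bB (n : ℕ) (x : (bW k A M (n + 2) : Type)) :
    bB ρ n (bB ρ (n + 1) x) = 0 := by
  induction n with
  | zero =>
    induction x using b_ind with
    | h0 => simp
    | ha x y hx hy => simp only [map_add, smul_add, add_zero, hx, hy]
    | hc a y => simp
  | succ n ih =>
    induction x using b_ind with
    | h0 => simp
    | ha x y hx hy => simp only [map_add, smul_add, add_zero, hx, hy]
    | hc a y => simp [ih]

@[simp] theorem bEps_bMul (n : ℕ) (a : A) (x : (bW k A M (n + 1) : Type)) :
    bEps ε M n (bMul ρ (n + 1) a x) = ε a • bEps ε M n x := by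
  induction x using b_ind with
  | h0 => simp
  | ha x y hx hy => simp only [map_add, smul_add, add_zero, hx, hy]
  | hc c y => simp [mul_smul]

theorem bD_bD (n : ℕ) (x : (bW k A M (n + 2) : Type)) :
    bD ε ρ n (bD ε ρ (n + 1) x) = 0 := by
  induction x using b_ind with
  | h0 => simp
  | ha x y hx hy => simp only [map_add, smul_add, add_zero, hx, hy]
  | hc a y =>
    have : bB ρ n (bC n a (bB ρ n y)) = bMul ρ n a (bB ρ n y) := by
      cases n with
      | zero => simp
      | succ n => simp
    simp [bD_apply, this]

/-- Functoriality in the coefficients. -/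
def bMap (f : M →ₗ[k] M') : ∀ n, (bW k A M n : Type) →ₗ[k] (bW k A M' n : Type)
  | 0 => bIn.comp (f.comp bOut)
  | n + 1 => bLift ((bC n).compl₂ (bMap f n))

@[simp] theorem bMap_zero (f : M →ₗ[k] M') (x : (bW k A M 0 : Type)) :
    bMap f 0 x = bIn (f (bOut x)) := rfl

@[simp] theorem bMap_succ (f : M →ₗ[k] M') (n : ℕ) (a : A) (x : (bW k A M n : Type)) :
    bMap (A := A) f (n + 1) (bC n a x) = bC n a (bMap f n x) := rfl

theorem bMap_bEps (f : M →ₗ[k] M') (n : ℕ) (x : (bW k A M (n + 1) : Type)) :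
    bMap f n (bEps ε M n x) = bEps ε M' n (bMap f (n + 1) x) := by
  induction x using b_ind with
  | h0 => simp
  | ha x y hx hy => simp only [map_add, smul_add, add_zero, hx, hy]
  | hc a y => simp

variable {ρ ρ' ρ''}

theorem bMap_bMul (f : M →ₗ[k] M') (hf : ∀ a m, f (ρ a m) = ρ' a (f m)) (n : ℕ) (a : A)
    (x : (bW k A M n : Type)) :
    bMap f n (bMul ρ n a x) = bMul ρ' n a (bMap f n x) := by
  cases n with
  | zero => simp [hf]
  | succ n =>
    induction x using b_ind with
    | h0 => simp
    | ha x y hx hy => simp only [map_add, smul_add, add_zero, hx, hy]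
    | hc b y => simp

theorem bMap_bB (f : M →ₗ[k] M') (hf : ∀ a m, f (ρ a m) = ρ' a (f m)) (n : ℕ)
    (x : (bW k A M (n + 1) : Type)) :
    bMap f n (bB ρ n x) = bB ρ' n (bMap f (n + 1) x) := by
  induction n with
  | zero =>
    induction x using b_ind with
    | h0 => simp
    | ha x y hx hy => simp only [map_add, smul_add, add_zero, hx, hy]
    | hc a y => simp [hf]
  | succ n ih =>
    induction x using b_ind with
    | h0 => simp
    | ha x y hx hy => simp only [map_add, smul_add, add_zero, hx, hy]
    | hc a y => simp [bMap_bMul f hf, ih]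

theorem bMap_bD (f : M →ₗ[k] M') (hf : ∀ a m, f (ρ a m) = ρ' a (f m)) (n : ℕ)
    (x : (bW k A M (n + 1) : Type)) :
    bMap f n (bD ε ρ n x) = bD ε ρ' n (bMap f (n + 1) x) := by
  rw [bD_apply, map_sub, bMap_bEps, bMap_bB f hf, bD_apply]

theorem bMap_inj (f : M →ₗ[k] M') (hf : Function.Injective f) (n : ℕ) :
    Function.Injective (bMap (A := A) f n) := by
  induction n with
  | zero => exact hf
  | succ n ih => exact Module.Flat.lTensor_preserves_injective_linearMap (M := A) _ ih

theorem bMap_surj (f : M →ₗ[k] M') (hf : Function.Surjective f) (n : ℕ) :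
    Function.Surjective (bMap (A := A) f n) := by
  induction n with
  | zero => exact hf
  | succ n ih => exact LinearMap.lTensor_surjective A ih

theorem bMap_exact (f : M' →ₗ[k] M) (g : M →ₗ[k] M'') (h : Function.Exact f g)
    (hg : Function.Surjective g) (n : ℕ) :
    Function.Exact (bMap (A := A) f n) (bMap (A := A) g n) := by
  induction n with
  | zero => exact h
  | succ n ih => exact lTensor_exact A ih (bMap_surj g hg n)

variable (ρ ρ' ρ'')

/-- Cycles. -/
def bCyc : ∀ (n : ℕ) (_ : (bW k A M n : Type)), Prop
  | 0 => fun _ => True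
  | n + 1 => fun x => bD ε ρ n x = 0

/-- The homology in degree `i` is detected by `c` functionals. -/
def Bd (i c : ℕ) : Prop :=
  ∃ (J : Type) (_ : Fintype J) (f : J → ((bW k A M i : Type) →ₗ[k] k)), Fintype.card J = c ∧
    ∀ z, bCyc ε ρ i z → (∀ j, f j z = 0) → ∃ y, bD ε ρ i y = z

theorem exists_geninv {V W : Type} [AddCommGroup V] [Module k V] [AddCommGroup W] [Module k W]
    (d : V →ₗ[k] W) : ∃ h : W →ₗ[k] V, ∀ y, d (h (d y)) = d y := by
  obtain ⟨g, hg⟩ := LinearMap.exists_rightInverse_of_surjective d.rangeRestrict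
    (LinearMap.range_rangeRestrict d)
  obtain ⟨h, hh⟩ := LinearMap.exists_extend g
  refine ⟨h, fun y => ?_⟩
  have h1 : h (d y) = g (d.rangeRestrict y) := by
    rw [← hh]; rfl
  have h2 := LinearMap.congr_fun hg (d.rangeRestrict y)
  rw [h1]
  exact congrArg Subtype.val h2

variable {ρ ρ' ρ''}

theorem Bd_zero_of_surj (g : M →ₗ[k] M'') (hge : ∀ a m, g (ρ a m) = ρ'' a (g m))
    (hg : Function.Surjective g) {c : ℕ} (h : Bd ε ρ 0 c) : Bd ε ρ'' 0 c := by
  obtain ⟨J, hJ, f, hc, h⟩ := h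
  obtain ⟨s, hs⟩ := LinearMap.exists_rightInverse_of_surjective (bMap (A := A) g 0)
    (LinearMap.range_eq_top.2 (bMap_surj g hg _))
  refine ⟨J, hJ, fun j => (f j).comp s, hc, fun z _ hz => ?_⟩
  obtain ⟨y, hy⟩ := h (s z) trivial hz
  refine ⟨bMap g 1 y, ?_⟩
  rw [← bMap_bD ε g hge, hy]
  exact LinearMap.congr_fun hs z

theorem Bd_ses (f : M' →ₗ[k] M) (g : M →ₗ[k] M'') (hfe : ∀ a m, f (ρ' a m) = ρ a (f m))
    (hge : ∀ a m, g (ρ a m) = ρ'' a (g m))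
    (hf : Function.Injective f) (hg : Function.Surjective g) (hfg : Function.Exact f g)
    {i c c' : ℕ} (h : Bd ε ρ (i + 1) c) (h' : Bd ε ρ' i c') : Bd ε ρ'' (i + 1) (c + c') := by
  obtain ⟨J, hJ, φ, hc, h⟩ := h
  obtain ⟨J', hJ', φ', hc', h'⟩ := h'
  obtain ⟨s, hs⟩ := LinearMap.exists_rightInverse_of_surjective (bMap (A := A) g (i + 1))
    (LinearMap.range_eq_top.2 (bMap_surj g hg _))
  obtain ⟨r, hr⟩ := LinearMap.exists_leftInverse_of_injective (bMap (A := A) f i)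
    (LinearMap.ker_eq_bot.2 (bMap_inj f hf _))
  obtain ⟨q, hq⟩ := exists_geninv (bD ε ρ' i)
  have hs : ∀ x, bMap (A := A) g (i + 1) (s x) = x := fun x => LinearMap.congr_fun hs x
  have hr : ∀ x, r (bMap (A := A) f i x) = x := fun x => LinearMap.congr_fun hr x
  let w : (bW k A M'' (i + 1) : Type) →ₗ[k] (bW k A M' i : Type) :=
    (r.comp (bD ε ρ i)).comp s
  let u : (bW k A M'' (i + 1) : Type) →ₗ[k] (bW k A M (i + 1) : Type) :=
    s - ((bMap (A := A) f (i + 1)).comp q).comp w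
  refine ⟨J ⊕ J', inferInstance, Sum.elim (fun j => (φ j).comp u) (fun j => (φ' j).comp w),
    by simp [hc, hc'], fun z hz hzz => ?_⟩
  have hz : bD ε ρ'' i z = 0 := hz
  have h1 : bMap (A := A) f i (w z) = bD ε ρ i (s z) := by
    have : bMap (A := A) g i (bD ε ρ i (s z)) = 0 := by
      rw [bMap_bD ε g hge, hs, hz]
    obtain ⟨v, hv⟩ := (bMap_exact f g hfg hg i _).1 this
    change bMap (A := A) f i (r (bD ε ρ i (s z))) = _
    rw [← hv, hr]
  have h2 : bCyc ε ρ' i (w z) := by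
    cases i with
    | zero => trivial
    | succ i =>
      apply bMap_inj (A := A) f hf
      rw [bMap_bD ε f hfe, h1, bD_bD, map_zero]
  obtain ⟨y, hy⟩ := h' (w z) h2 (fun j => hzz (Sum.inr j))
  have h3 : bD ε ρ' i (q (w z)) = w z := by rw [← hy, hq]
  have h4 : bD ε ρ i (u z) = 0 := by
    change bD ε ρ i (s z - bMap f (i + 1) (q (w z))) = 0
    rw [map_sub, ← bMap_bD ε f hfe, h3, h1, sub_self]
  obtain ⟨y', hy'⟩ := h (u z) h4 (fun j => hzz (Sum.inl j))
  refine ⟨bMap g (i + 2) y', ?_⟩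
  rw [← bMap_bD ε g hge, hy']
  change bMap g (i + 1) (s z - bMap f (i + 1) (q (w z))) = z
  rw [map_sub, hs, (bMap_exact f g hfg hg (i + 1)).apply_apply_eq_zero, sub_zero]

/-- Transfer along an isomorphism. -/
theorem Bd_iso (f : M ≃ₗ[k] M') (hfe : ∀ a m, f (ρ a m) = ρ' a (f m))
    {i c : ℕ} (h : Bd ε ρ i c) : Bd ε ρ' i c := by
  obtain ⟨J, hJ, φ, hc, h⟩ := h
  have hfe' : ∀ a m, f.symm (ρ' a m) = ρ a (f.symm m) := fun a m => by
    apply f.injective; simp [hfe]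
  refine ⟨J, hJ, fun j => (φ j).comp (bMap f.symm.toLinearMap i), hc, fun z hz hzz => ?_⟩
  have h1 : bCyc ε ρ i (bMap f.symm.toLinearMap i z) := by
    cases i with
    | zero => trivial
    | succ i =>
      change bD _ _ _ _ = _
      rw [← bMap_bD ε (ρ := ρ') f.symm.toLinearMap hfe']
      exact (congrArg _ hz).trans (map_zero _)
  obtain ⟨y, hy⟩ := h _ h1 hzz
  refine ⟨bMap f.toLinearMap _ y, ?_⟩
  rw [← bMap_bD ε (ρ := ρ) f.toLinearMap hfe, hy]
  clear * -
  induction i with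
  | zero => simp
  | succ i ih =>
    induction z using b_ind with
    | h0 => simp
    | ha x y hx hy => simp only [map_add, smul_add, add_zero, hx, hy]
    | hc a y => simp [ih]

/-- The contraction for free coefficients. -/
def bS : ∀ n, (bW k A A n : Type) →ₗ[k] (bW k A A (n + 1) : Type)
  | 0 => ((bC 0).flip (bIn 1)).comp bOut
  | n + 1 => bLift ((bC (n + 1)).compl₂ (bS n))

@[simp] theorem bS_zero (x : (bW k A A 0 : Type)) : bS 0 x = bC 0 (bOut x) (bIn (1 : A)) := rfl

@[simp] theorem bS_succ (n : ℕ) (a : A) (x : (bW k A A n : Type)) :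
    bS (n + 1) (bC n a x) = bC (n + 1) a (bS n x) := rfl

theorem bS_bMul (n : ℕ) (a : A) (x : (bW k A A n : Type)) :
    bMul (Algebra.lmul k A) (n + 1) a (bS n x) = bS n (bMul (Algebra.lmul k A) n a x) := by
  cases n with
  | zero => simp
  | succ n =>
    induction x using b_ind with
    | h0 => simp
    | ha x y hx hy => simp only [map_add, smul_add, add_zero, hx, hy]
    | hc a y => simp

theorem bEps_bS (n : ℕ) (x : (bW k A A (n + 1) : Type)) :
    bEps ε A (n + 1) (bS (n + 1) x) = bS n (bEps ε A n x) := by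
  induction x using b_ind with
  | h0 => simp
  | ha x y hx hy => simp only [map_add, smul_add, add_zero, hx, hy]
  | hc a y => simp

theorem bB_bS (n : ℕ) : ∃ t : k, t * t = 1 ∧ ∀ x : (bW k A A (n + 1) : Type),
      bB (Algebra.lmul k A) (n + 1) (bS (n + 1) x) = bS n (bB (Algebra.lmul k A) n x) + t • x := by
  induction n with
  | zero =>
    refine ⟨-1, by simp, fun x => ?_⟩
    induction x using b_ind with
    | h0 => simp
    | ha x y hx hy => simp only [map_add, hx, hy]; module
    | hc a y => simp [sub_eq_add_neg]
  | succ n ih =>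
    obtain ⟨t, ht, h⟩ := ih
    refine ⟨-t, by simpa using ht, fun x => ?_⟩
    induction x using b_ind with
    | h0 => simp
    | ha x y hx hy => simp only [map_add, hx, hy]; module
    | hc a y =>
      simp only [bS_succ, bB_succ, h, bS_bMul, map_add, map_sub, map_smul]
      module

theorem Bd_free_succ (i : ℕ) : Bd ε (Algebra.lmul k A) (i + 1) 0 := by
  refine ⟨Empty, inferInstance, fun e => e.elim, rfl, fun z hz _ => ?_⟩
  obtain ⟨t, ht, h⟩ := bB_bS (k := k) (A := A) i
  have hz : bD ε (Algebra.lmul k A) i z = 0 := hz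
  refine ⟨-t • bS (i + 1) z, ?_⟩
  rw [map_smul, bD_apply, bEps_bS, h, ← sub_sub, ← map_sub, ← bD_apply, hz, map_zero, zero_sub,
    neg_smul_neg, smul_smul, ht, one_smul]

theorem Bd_free_zero : Bd ε (Algebra.lmul k A) 0 1 := by
  refine ⟨Unit, inferInstance, fun _ => ε.toLinearMap.comp bOut, rfl, fun z _ h => ?_⟩
  have h : ε (bOut z) = 0 := h ()
  refine ⟨- bS 0 z, ?_⟩
  simp [bD_apply, h]

end BarComplex
section ExtPart

variable {k : Type} [Field k] {n : ℕ}

variable {A : Type} [Ring A] [Algebra k A]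

/-- The characteristic properties of the exterior algebra. -/
structure IsExt (e : Fin n → A) (ε : A →ₐ[k] k) : Prop where
  anti : ∀ i j, e i * e j + e j * e i = 0
  sq : ∀ i, e i * e i = 0
  aug : ∀ i, ε (e i) = 0
  lift : ∀ (B : Type) [Ring B] [Algebra k B] (f : Fin n → B)
    (_ : ∀ i j, f i * f j + f j * f i = 0) (_ : ∀ i, f i * f i = 0),
    ∃ φ : A →ₐ[k] B, ∀ i, φ (e i) = f i
  ind : ∀ {p : A → Prop} (_ : ∀ r, p (algebraMap k _ r)) (_ : ∀ i, p (e i))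
    (_ : ∀ a b, p a → p b → p (a * b)) (_ : ∀ a b, p a → p b → p (a + b)) (a), p a

theorem isExt_extAlg : IsExt (k := k) (A := ExtAlg k n)
    (fun i : Fin n => RingQuot.mkAlgHom k (ExtRel k n) (FreeAlgebra.ι k i)) (extAug k n) where
  anti i j := by
    have := RingQuot.mkAlgHom_rel k (s := ExtRel k n)
      (x := FreeAlgebra.ι k i * FreeAlgebra.ι k j + FreeAlgebra.ι k j * FreeAlgebra.ι k i)
      (y := 0) ⟨Or.inl ⟨i, j, rfl⟩, rfl⟩
    rw [map_add, map_mul, map_mul, map_zero] at this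
    exact this
  sq i := by
    have := RingQuot.mkAlgHom_rel k (s := ExtRel k n) (x := FreeAlgebra.ι k i * FreeAlgebra.ι k i)
      (y := 0) ⟨Or.inr ⟨i, rfl⟩, rfl⟩
    rw [map_mul, map_zero] at this
    exact this
  aug i := by simp [extAug]
  lift B _ _ f h1 h2 := by
    refine ⟨RingQuot.liftAlgHom k ⟨FreeAlgebra.lift k f, ?_⟩, fun i => ?_⟩
    · rintro x y ⟨(⟨i, j, rfl⟩ | ⟨i, rfl⟩), rfl⟩
      · simpa using h1 i j
      · simpa using h2 i
    · simp
  ind {p} h0 h1 hm ha a := by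
    obtain ⟨a, rfl⟩ := RingQuot.mkAlgHom_surjective k (ExtRel k n) a
    induction a using FreeAlgebra.induction with
    | grade0 r => rw [AlgHom.commutes]; exact h0 r
    | grade1 i => exact h1 i
    | mul a b ha' hb' => rw [map_mul]; exact hm _ _ ha' hb'
    | add a b ha' hb' => rw [map_add]; exact ha _ _ ha' hb'

variable {e : Fin n → A} {ε : A →ₐ[k] k}

/-- The matrix representation encoding the antiderivation `∂_j`. -/
theorem exists_pd (H : IsExt e ε) (j : Fin n) : ∃ φ : A →ₐ[k] Matrix (Fin 2) (Fin 2) A,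
    ∀ i, φ (e i) = !![e i, if i = j then 1 else 0; 0, - e i] := by
  apply H.lift
  · intro i l
    have h := H.anti i l
    ext a b
    fin_cases a <;> fin_cases b
    · by_cases h1 : i = j <;> by_cases h2 : l = j <;>
        simpa [Matrix.mul_apply, Fin.sum_univ_two, h1, h2] using h
    · by_cases h1 : i = j <;> by_cases h2 : l = j <;>
        simp [Matrix.mul_apply, Fin.sum_univ_two, h1, h2]
    · simp [Matrix.mul_apply, Fin.sum_univ_two]
    · simpa [Matrix.mul_apply, Fin.sum_univ_two] using h
  · intro i
    have h := H.sq i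
    ext a b
    fin_cases a <;> fin_cases b
    · simpa [Matrix.mul_apply, Fin.sum_univ_two] using h
    · by_cases h1 : i = j <;> simp [Matrix.mul_apply, Fin.sum_univ_two, h1]
    · simp [Matrix.mul_apply, Fin.sum_univ_two]
    · simpa [Matrix.mul_apply, Fin.sum_univ_two] using h

/-- The matrix representation encoding the antiderivation `∂_j`. -/
def pd (H : IsExt e ε) (j : Fin n) : A →ₐ[k] Matrix (Fin 2) (Fin 2) A :=
  Classical.choose (exists_pd H j)

theorem pd_eG (H : IsExt e ε) (j i : Fin n) :
    pd H j (e i) = !![e i, if i = j then 1 else 0; 0, - e i] :=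
  Classical.choose_spec (exists_pd H j) i

theorem pd_aux (H : IsExt e ε) (j : Fin n) (a : A) : pd H j a 0 0 = a ∧ pd H j a 1 0 = 0 := by
  refine H.ind (p := fun a => pd H j a 0 0 = a ∧ pd H j a 1 0 = 0) ?_ ?_ ?_ ?_ a
  · intro r; simp [Matrix.algebraMap_matrix_apply]
  · intro i; simp [pd_eG]
  · intro a b ha hb; simp [Matrix.mul_apply, Fin.sum_univ_two, ha, hb]
  · intro a b ha hb; simp [ha, hb]

theorem pd_mul01 (H : IsExt e ε) (j : Fin n) (a b : A) :
    pd H j (a * b) 0 1 = a * pd H j b 0 1 + pd H j a 0 1 * pd H j b 1 1 := by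
  simp [Matrix.mul_apply, Fin.sum_univ_two, pd_aux]

theorem pd_mul11 (H : IsExt e ε) (j : Fin n) (a b : A) :
    pd H j (a * b) 1 1 = pd H j a 1 1 * pd H j b 1 1 := by
  simp [Matrix.mul_apply, Fin.sum_univ_two, pd_aux]

variable (e) in
/-- The left ideal generated by the first `j` generators. -/
def eI (j : ℕ) : Submodule A A :=
  Submodule.span _ {x | ∃ i : Fin n, i.val < j ∧ x = e i}

theorem eG_mem (j : ℕ) (i : Fin n) (h : i.val < j) : (e i) ∈ eI e j :=
  Submodule.subset_span ⟨i, h, rfl⟩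

theorem eI_mono (j : ℕ) : eI e j ≤ eI e (j + 1) := by
  apply Submodule.span_mono
  rintro x ⟨i, h, rfl⟩
  exact ⟨i, by omega, rfl⟩

theorem pd_mem (H : IsExt e ε) (j : Fin n) (x : A) (hx : x ∈ eI e j) :
    pd H j x 0 1 ∈ eI e j ∧ pd H j x 1 1 ∈ eI e j := by
  induction hx using Submodule.span_induction with
  | mem x h =>
    obtain ⟨i, h, rfl⟩ := h
    have : i ≠ j := by rintro rfl; omega
    simp only [pd_eG]
    simp [this, eG_mem _ _ h]
  | zero => simp
  | add x y _ _ hx hy =>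
    simp only [map_add, Matrix.add_apply]
    exact ⟨add_mem hx.1 hy.1, add_mem hx.2 hy.2⟩
  | smul a x _ hx =>
    rw [smul_eq_mul, pd_mul01, pd_mul11]
    exact ⟨add_mem (Submodule.smul_mem _ _ hx.1) (Submodule.smul_mem _ _ hx.2),
      Submodule.smul_mem _ _ hx.2⟩

theorem mul_eG_mem (H : IsExt e ε) (j : Fin n) (x : A) (hx : x ∈ eI e (j + 1)) :
    x * e j ∈ eI e j := by
  induction hx using Submodule.span_induction with
  | mem x h =>
    obtain ⟨i, h, rfl⟩ := h
    by_cases hij : i = j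
    · subst hij; simp [H.sq]
    · have : i.val < j := by
        have : i.val ≠ j.val := fun h => hij (Fin.ext h)
        omega
      rw [eq_neg_of_add_eq_zero_left (H.anti i j)]
      exact neg_mem (Submodule.smul_mem _ (e j) (eG_mem _ _ this))
  | zero => simp
  | add x y _ _ hx hy => rw [add_mul]; exact add_mem hx hy
  | smul a x _ hx => rw [smul_mul_assoc]; exact Submodule.smul_mem _ _ hx

theorem mem_of_mul_eG_mem (H : IsExt e ε) (j : Fin n) (x : A) (hx : x * e j ∈ eI e j) :
    x ∈ eI e (j + 1) := by
  have h := (pd_mem H j _ hx).1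
  rw [pd_mul01] at h
  simp only [pd_eG] at h
  simp at h
  have h2 : pd H j x 0 1 * e j ∈ eI e (j + 1) :=
    Submodule.smul_mem _ (pd H j x 0 1) (eG_mem _ j (by omega))
  have h3 := add_mem (eI_mono _ h) h2
  simpa using h3

theorem eI_succ (j : Fin n) (x : A) (hx : x ∈ eI e (j + 1)) :
    ∃ y, x - y * e j ∈ eI e j := by
  induction hx using Submodule.span_induction with
  | mem x h =>
    obtain ⟨i, h, rfl⟩ := h
    by_cases hij : i = j
    · exact ⟨1, by simp [hij]⟩
    · have : i.val < j := by
        have : i.val ≠ j.val := fun h => hij (Fin.ext h)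
        omega
      exact ⟨0, by simpa using eG_mem _ _ this⟩
  | zero => exact ⟨0, by simp⟩
  | add x y _ _ hx hy =>
    obtain ⟨u, hu⟩ := hx
    obtain ⟨v, hv⟩ := hy
    refine ⟨u + v, ?_⟩
    have := add_mem hu hv
    rwa [show x - u * e j + (y - v * e j) = x + y - (u + v) * e j by noncomm_ring] at this
  | smul a x _ hx =>
    obtain ⟨u, hu⟩ := hx
    refine ⟨a * u, ?_⟩
    have := Submodule.smul_mem _ a hu
    rwa [smul_sub, smul_eq_mul, smul_eq_mul, ← mul_assoc] at this

theorem sub_aug_mem (H : IsExt e ε) (x : A) : x - algebraMap k _ (ε x) ∈ eI e n := by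
  refine H.ind (p := fun x => x - algebraMap k _ (ε x) ∈ eI e n) ?_ ?_ ?_ ?_ x
  · intro r; simp
  · intro i; simpa [H.aug] using eG_mem _ _ i.2
  · intro a b ha hb
    have h1 := Submodule.smul_mem _ a hb
    have h2 := Submodule.smul_mem _ (algebraMap k A (ε b)) ha
    have := add_mem h1 h2
    rw [smul_eq_mul, smul_eq_mul, mul_sub, mul_sub, ← Algebra.commutes (ε b) a] at this
    rw [map_mul, map_mul, ← Algebra.commutes (ε b)]
    simpa using this
  · intro a b ha hb
    have := add_mem ha hb
    rwa [show a - algebraMap k _ (ε a) + (b - algebraMap k _ (ε b))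
      = a + b - algebraMap k _ (ε (a + b)) by rw [map_add, map_add]; abel] at this

theorem aug_of_mem (H : IsExt e ε) (j : ℕ) (x : A) (hx : x ∈ eI e j) : ε x = 0 := by
  induction hx using Submodule.span_induction with
  | mem x h =>
    obtain ⟨i, h, rfl⟩ := h
    exact H.aug i
  | zero => simp
  | add x y _ _ hx hy => simp [hx, hy]
  | smul a x _ hx => simp [hx]

variable (k e) in
/-- The action on the cyclic module `E / (e_1, …, e_j)`. -/
def eAct (j : ℕ) : A →ₐ[k] Module.End k (A ⧸ eI e j) :=
  Algebra.lsmul k k _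

/-- Right multiplication by `e_j`. -/
def eF (H : IsExt e ε) (j : Fin n) : (A ⧸ eI e (j + 1)) →ₗ[A] (A ⧸ eI e j) :=
  Submodule.mapQ _ _ (LinearMap.toSpanSingleton _ _ (e j)) (fun x hx => mul_eG_mem H j x hx)

variable (e) in
/-- The projection. -/
def eP (j : ℕ) : (A ⧸ eI e j) →ₗ[A] (A ⧸ eI e (j + 1)) :=
  Submodule.factor (eI_mono j)

theorem eF_mk (H : IsExt e ε) (j : Fin n) (x : A) :
    eF H j (Submodule.Quotient.mk x) = Submodule.Quotient.mk (x * e j) := rfl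

theorem eP_mk (j : ℕ) (x : A) :
    eP e j (Submodule.Quotient.mk x) = Submodule.Quotient.mk x := rfl

theorem Bd_eI_free (i : ℕ) : Bd (ε) (eAct k e 0) i (Nat.multichoose 0 i) := by
  have h : eI e 0 = ⊥ := by simp [eI]
  have hge : ∀ a m, ((Submodule.quotEquivOfEqBot _ h).symm.restrictScalars k)
      (Algebra.lmul k A a m) =
        eAct k e 0 a (((Submodule.quotEquivOfEqBot _ h).symm.restrictScalars k) m) := by
    intro a m
    exact (Submodule.quotEquivOfEqBot _ h).symm.map_smul a m
  refine Bd_iso (ε) (ρ := Algebra.lmul k A) (ρ' := eAct k e 0)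
      ((Submodule.quotEquivOfEqBot _ h).symm.restrictScalars k) hge ?_
  cases i with
  | zero => rw [Nat.multichoose_zero_right]; exact Bd_free_zero ε
  | succ i => rw [Nat.multichoose_zero_succ]; exact Bd_free_succ ε i

theorem Bd_eI_zero (j : ℕ) : Bd (ε) (eAct k e j) 0 1 := by
  have hge : ∀ a m, ((eI e j).mkQ.restrictScalars k) (Algebra.lmul k A a m) =
      eAct k e j a (((eI e j).mkQ.restrictScalars k) m) := by
    intro a m
    rfl
  have hs : Function.Surjective ((eI e j).mkQ.restrictScalars k) :=
    fun x => Submodule.mkQ_surjective _ x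
  exact Bd_zero_of_surj (ε) (ρ := Algebra.lmul k (A)) (ρ'' := eAct k e j)
    ((eI e j).mkQ.restrictScalars k)
    hge hs (Bd_free_zero ε)

theorem eF_inj (H : IsExt e ε) (J : Fin n) : Function.Injective (eF H J) := by
  rw [injective_iff_map_eq_zero]
  intro x
  induction x using Submodule.Quotient.induction_on with
  | _ x =>
  intro h
  rw [eF_mk, Submodule.Quotient.mk_eq_zero] at h
  rw [Submodule.Quotient.mk_eq_zero]
  exact mem_of_mul_eG_mem H J x h

theorem eFP_exact (H : IsExt e ε) (J : Fin n) : Function.Exact (eF H J) (eP e J) := by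
  intro x
  induction x using Submodule.Quotient.induction_on with
  | _ x =>
  rw [eP_mk, Submodule.Quotient.mk_eq_zero]
  constructor
  · intro h
    obtain ⟨y, hy⟩ := eI_succ J x h
    refine ⟨Submodule.Quotient.mk y, ?_⟩
    rw [eF_mk]
    exact ((Submodule.Quotient.eq _).2 hy).symm
  · rintro ⟨y, hy⟩
    induction y using Submodule.Quotient.induction_on with
    | _ y =>
    rw [eF_mk] at hy
    have h1 := eI_mono _ ((Submodule.Quotient.eq _).1 hy.symm)
    have h2 : y * e J ∈ eI e (J + 1) :=
      Submodule.smul_mem _ y (eG_mem _ J (Nat.lt_succ_self _))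
    simpa using add_mem h1 h2

theorem Bd_eI_step (H : IsExt e ε) (J : Fin n) (i c c' : ℕ) (h : Bd ε (eAct k e J) (i + 1) c)
    (h' : Bd ε (eAct k e (J + 1)) i c') : Bd ε (eAct k e (J + 1)) (i + 1) (c + c') := by
  have hfe : ∀ a m, ((eF H J).restrictScalars k) (eAct k e (J + 1) a m) =
      eAct k e J a (((eF H J).restrictScalars k) m) := fun a m => (eF H J).map_smul a m
  have hge : ∀ a m, ((eP e J).restrictScalars k) (eAct k e J a m) =
      eAct k e (J + 1) a (((eP e J).restrictScalars k) m) := fun a m => (eP e J).map_smul a m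
  have h1 : Function.Injective ((eF H J).restrictScalars k) := eF_inj H J
  have h2 : Function.Surjective ((eP e J).restrictScalars k) :=
    fun x => Submodule.factor_surjective (eI_mono (e := e) J) x
  have h3 : Function.Exact ((eF H J).restrictScalars k) ((eP e J).restrictScalars k) :=
    eFP_exact H J
  exact Bd_ses (ε) (ρ := eAct k e J) (ρ' := eAct k e (J + 1)) (ρ'' := eAct k e (J + 1))
    ((eF H J).restrictScalars k) ((eP e J).restrictScalars k) hfe hge
    h1 h2 h3 h h'

theorem Bd_eI (H : IsExt e ε) (j : ℕ) (hj : j ≤ n) (i : ℕ) :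
    Bd (ε) (eAct k e j) i (Nat.multichoose j i) := by
  induction j generalizing i with
  | zero => exact Bd_eI_free i
  | succ j ih =>
    induction i with
    | zero =>
      rw [Nat.multichoose_zero_right]
      exact Bd_eI_zero _
    | succ i ih2 =>
      rw [Nat.multichoose_succ_succ]
      exact Bd_eI_step H ⟨j, hj⟩ i _ _ (ih (by omega) (i + 1)) ih2

/-- The trivial module. -/
def kAct (ε : A →ₐ[k] k) : A →ₐ[k] Module.End k k :=
  (Algebra.lsmul k k k).comp ε

@[simp] theorem kAct_apply (ε : A →ₐ[k] k) (a : A) (t : k) :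
    kAct ε a t = ε a * t := rfl

theorem Bd_k (H : IsExt e ε) (i : ℕ) : Bd (ε) (kAct (ε)) i (Nat.multichoose n i) := by
  let g : k →ₗ[k] (A ⧸ eI e n) :=
    ((eI e n).mkQ.restrictScalars k).comp (Algebra.linearMap k (A))
  have hg : ∀ t, g t = Submodule.Quotient.mk (algebraMap k _ t) := fun t => rfl
  have hs : ∀ x : A, (Submodule.Quotient.mk x : A ⧸ eI e n) =
      g (ε x) := fun x => (Submodule.Quotient.eq _).2 (sub_aug_mem H x)
  have hb : Function.Bijective g := by
    constructor
    · rw [injective_iff_map_eq_zero]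
      intro t ht
      rw [hg, Submodule.Quotient.mk_eq_zero] at ht
      simpa using aug_of_mem H _ _ ht
    · intro x
      induction x using Submodule.Quotient.induction_on with
      | _ x => exact ⟨_, (hs x).symm⟩
  have hge : ∀ a t, g (kAct (ε) a t) = eAct k e n a (g t) := by
    intro a t
    have : eAct k e n a (g t) = Submodule.Quotient.mk (a * algebraMap k _ t) := rfl
    rw [this, hs]
    simp
  refine Bd_iso (ε) (LinearEquiv.ofBijective g hb).symm ?_ (Bd_eI H n le_rfl i)
  intro a m
  apply (LinearEquiv.ofBijective g hb).injective
  rw [LinearEquiv.apply_symm_apply]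
  have h := hge a ((LinearEquiv.ofBijective g hb).symm m)
  have h2 : g ((LinearEquiv.ofBijective g hb).symm m) = m :=
    (LinearEquiv.ofBijective g hb).apply_symm_apply m
  rw [h2] at h
  exact h.symm

end ExtPart
section Transfer

variable {k : Type} [Field k] {A : Type} [Ring A] [Algebra k A] (ε : A →ₐ[k] k)

variable (k A) in
/-- Comparison of the two models of the bar complex with trivial coefficients. -/
def bTh : ∀ n, (bW k A k n : Type) ≃ₗ[k] (hW k A n : Type)
  | 0 => LinearEquiv.refl k k
  | n + 1 => TensorProduct.congr (LinearEquiv.refl k A) (bTh n)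

/-- `a, x ↦ a ⊗ x`. -/
def hC (n : ℕ) (a : A) : (hW k A n : Type) →ₗ[k] (hW k A (n + 1) : Type) :=
  TensorProduct.mk k A (hW k A n) a

theorem bTh_bC (n : ℕ) (a : A) (x : (bW k A k n : Type)) :
    bTh k A (n + 1) (bC n a x) = hC n a (bTh k A n x) := rfl

/-- Multiplication onto the leftmost factor. -/
def hMul (n : ℕ) : (hW k A (n + 2) : Type) →ₗ[k] (hW k A (n + 1) : Type) :=
  (TensorProduct.map (LinearMap.mul' k A) LinearMap.id).comp
          (TensorProduct.assoc k A A (hW k A n)).symm.toLinearMap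

theorem hMul_hC (n : ℕ) (a b : A) (x : (hW k A n : Type)) :
    hMul n (hC (n + 1) a (hC n b x)) = hC n (a * b) x := rfl

/-- Augmentation. -/
def hE (n : ℕ) : (hW k A (n + 1) : Type) →ₗ[k] (hW k A n : Type) := hEps k A ε n

theorem hE_hC (n : ℕ) (a : A) (x : (hW k A n : Type)) :
    hE ε n (hC n a x) = ε a • x := rfl

theorem hDelta_hC (n : ℕ) (a : A) (x : (hW k A (n + 1) : Type)) :
    hDelta k A ε (n + 1) (hC (n + 1) a x) =
      ε a • x - hMul n (hC (n + 1) a x) - hC n a (hDelta k A ε n x) + hC n a (hE ε n x) := rfl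

theorem bTh_bEps (n : ℕ) (x : (bW k A k (n + 1) : Type)) :
    hE ε n (bTh k A (n + 1) x) = bTh k A n (bEps ε k n x) := by
  induction x using b_ind with
  | h0 => simp
  | ha x y hx hy => simp only [map_add, smul_add, add_zero, hx, hy]
  | hc a y => simp [bTh_bC, hE_hC]

theorem bTh_bMul (n : ℕ) (a : A) (x : (bW k A k (n + 1) : Type)) :
    hMul n (hC (n + 1) a (bTh k A (n + 1) x)) =
      bTh k A (n + 1) (bMul (kAct ε) (n + 1) a x) := by
  induction x using b_ind with
  | h0 => simp
  | ha x y hx hy => simp only [map_add, smul_add, add_zero, hx, hy]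
  | hc b y => simp [bTh_bC, hMul_hC]

theorem bD_kAct_zero (x : (bW k A k 1 : Type)) : bD ε (kAct ε) 0 x = 0 := by
  induction x using b_ind with
  | h0 => simp
  | ha x y hx hy => simp only [map_add, smul_add, add_zero, hx, hy]
  | hc a y =>
    rw [bD_apply, bEps_bC, bB_zero, sub_eq_zero, kAct_apply, ← smul_eq_mul, map_smul,
      bIn_bOut]

theorem bTh_bD (n : ℕ) (x : (bW k A k (n + 1) : Type)) :
    hDelta k A ε n (bTh k A (n + 1) x) = bTh k A n (bD ε (kAct ε) n x) := by
  induction n with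
  | zero =>
    rw [bD_kAct_zero, map_zero]
    rfl
  | succ n ih =>
    induction x using b_ind with
    | h0 => simp
    | ha x y hx hy => simp only [map_add, smul_add, add_zero, hx, hy]
    | hc a y =>
      simp only [bTh_bC, hDelta_hC, bTh_bMul ε, ih, bTh_bEps, bD_apply, bEps_bC, bB_succ,
        map_sub, map_smul]
      abel

end Transfer

section LinAlg

variable {k : Type} [Field k] {X Y Z : Type} [AddCommGroup X] [Module k X]
  [AddCommGroup Y] [Module k Y] [AddCommGroup Z] [Module k Z]

theorem rank_homology_le (d1 : X →ₗ[k] Y) (d2 : Z →ₗ[k] X) {J : Type} [Fintype J]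
    (f : J → X →ₗ[k] k) (h : ∀ z, d1 z = 0 → (∀ j, f j z = 0) → ∃ y, d2 y = z) :
    Module.rank k (LinearMap.ker d1 ⧸ Submodule.comap (LinearMap.ker d1).subtype
      (LinearMap.range d2)) ≤ (Fintype.card J : Cardinal) := by
  let F : LinearMap.ker d1 →ₗ[k] (J → k) :=
    (LinearMap.pi f).comp (LinearMap.ker d1).subtype
  have hF : LinearMap.ker F ≤ Submodule.comap (LinearMap.ker d1).subtype
      (LinearMap.range d2) := by
    rintro ⟨z, hz⟩ hz'
    have h2 : F ⟨z, hz⟩ = 0 := hz'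
    obtain ⟨y, hy⟩ := h z hz (fun j => congrFun h2 j)
    exact ⟨y, hy⟩
  calc _ ≤ Module.rank k (LinearMap.ker d1 ⧸ LinearMap.ker F) :=
        (Submodule.factor hF).rank_le_of_surjective (Submodule.factor_surjective hF)
    _ = Module.rank k (LinearMap.range F) := F.quotKerEquivRange.rank_eq
    _ ≤ Module.rank k (J → k) := Submodule.rank_le _
    _ = _ := rank_fun'

theorem le_rank_homology (d1 : X →ₗ[k] Y) (d2 : Z →ₗ[k] X) {S : Type} [Fintype S] [DecidableEq S]
    (L : S → X →ₗ[k] k) (z : S → X) (hz : ∀ s, d1 (z s) = 0) (hL : ∀ s y, L s (d2 y) = 0)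
    (h : ∀ s t, L t (z s) = if s = t then 1 else 0) :
    (Fintype.card S : Cardinal) ≤ Module.rank k (LinearMap.ker d1 ⧸
      Submodule.comap (LinearMap.ker d1).subtype (LinearMap.range d2)) := by
  let F : LinearMap.ker d1 →ₗ[k] (S → k) :=
    (LinearMap.pi L).comp (LinearMap.ker d1).subtype
  have hF : Submodule.comap (LinearMap.ker d1).subtype (LinearMap.range d2) ≤ LinearMap.ker F := by
    rintro ⟨z, hz⟩ ⟨y, hy⟩
    have hy : d2 y = z := hy
    subst hy
    refine funext fun s => hL s y
  have hs : Function.Surjective (Submodule.liftQ _ F hF) := by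
    intro v
    refine ⟨∑ s, v s • Submodule.Quotient.mk ⟨z s, hz s⟩, ?_⟩
    have h1 : ∀ s, Submodule.liftQ _ F hF (Submodule.Quotient.mk ⟨z s, hz s⟩) =
      fun t => if s = t then 1 else 0 := fun s => funext fun t => h s t
    rw [map_sum]
    funext t
    simp [h1, Finset.sum_apply]
  have := LinearMap.rank_le_of_surjective _ hs
  rwa [rank_fun'] at this

end LinAlg
section Lower

variable {k : Type} [Field k] {n : ℕ} {A : Type} [Ring A] [Algebra k A]
variable {e : Fin n → A} {ε : A →ₐ[k] k}

theorem aug_pd (H : IsExt e ε) (j : Fin n) (a : A) : ε (pd H j a 1 1) = ε a := by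
  refine H.ind (p := fun a => ε (pd H j a 1 1) = ε a) ?_ ?_ ?_ ?_ a
  · intro r; simp [Matrix.algebraMap_matrix_apply]
  · intro i; simp [pd_eG, H.aug]
  · intro a b ha hb; rw [pd_mul11, map_mul, map_mul, ha, hb]
  · intro a b ha hb; simp [ha, hb]

/-- The coefficient of `e_j`. -/
def co (H : IsExt e ε) (j : Fin n) : A →ₗ[k] k :=
  ε.toLinearMap.comp ((Matrix.entryLinearMap k A 0 1).comp (pd H j).toLinearMap)

theorem co_apply (H : IsExt e ε) (j : Fin n) (a : A) : co H j a = ε (pd H j a 0 1) := rfl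

theorem co_eG (H : IsExt e ε) (j i : Fin n) : co H j (e i) = if i = j then 1 else 0 := by
  rw [co_apply, pd_eG]
  by_cases h : i = j <;> simp [h]

theorem co_mul (H : IsExt e ε) (j : Fin n) (a b : A) :
    co H j (a * b) = ε a * co H j b + co H j a * ε b := by
  simp only [co_apply, pd_mul01, map_add, map_mul, aug_pd]

/-- The functional attached to a word. -/
def bL (H : IsExt e ε) : ∀ (i : ℕ) (_ : List (Fin n)), (bW k A k i : Type) →ₗ[k] k
  | 0, _ => bOut
  | _ + 1, [] => 0
  | i + 1, c :: l => bLift ((LinearMap.lsmul k k).comp (co H c) |>.compl₂ (bL H i l))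

theorem bL_nil (H : IsExt e ε) (i : ℕ) (x) : bL H (i + 1) [] x = 0 := rfl

theorem bL_cons (H : IsExt e ε) (i : ℕ) (c : Fin n) (l : List (Fin n)) (a : A)
    (x : (bW k A k i : Type)) :
    bL H (i + 1) (c :: l) (bC i a x) = co H c a * bL H i l x := rfl

theorem bL_bMul (H : IsExt e ε) (i : ℕ) (c : Fin n) (l : List (Fin n)) (a : A)
    (x : (bW k A k (i + 1) : Type)) :
    bL H (i + 1) (c :: l) (bMul (kAct ε) (i + 1) a x) =
      ε a * bL H (i + 1) (c :: l) x + co H c a * bL H i l (bEps ε k i x) := by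
  induction x using b_ind with
  | h0 => simp
  | ha x y hx hy => simp only [map_add, hx, hy]; ring
  | hc b x =>
    simp only [bMul_succ, bL_cons, co_mul, bEps_bC, map_smul, smul_eq_mul]
    ring

theorem bL_bD (H : IsExt e ε) (i : ℕ) (l : List (Fin n)) (x : (bW k A k (i + 1) : Type)) :
    bL H i l (bD ε (kAct ε) i x) = 0 := by
  induction i generalizing l with
  | zero => rw [bD_kAct_zero, map_zero]
  | succ i ih =>
    cases l with
    | nil => rfl
    | cons c l =>
    induction x using b_ind with
    | h0 => simp
    | ha x y hx hy => simp only [map_add, smul_add, add_zero, hx, hy]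
    | hc a x =>
      have h := ih l x
      rw [bD_apply, map_sub] at h
      rw [bD_apply, bEps_bC, bB_succ, map_sub, map_sub, bL_bMul, bL_cons, map_smul, smul_eq_mul]
      linear_combination (- co H c a) * h

variable (k e) in
/-- The cycle attached to an exponent vector. -/
def bZ : ∀ (i : ℕ) (_ : Fin n → ℤ), (bW k A k i : Type)
  | 0, m => if m = 0 then bIn 1 else 0
  | i + 1, m => ∑ a, bC i (e a) (bZ i (m - Pi.single a 1))

theorem bZ_succ (i : ℕ) (m : Fin n → ℤ) :
    bZ k e (i + 1) m = ∑ a, bC i (e a) (bZ k e i (m - Pi.single a 1)) := rfl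

theorem bEps_bZ (H : IsExt e ε) (i : ℕ) (m : Fin n → ℤ) : bEps ε k i (bZ k e (i + 1) m) = 0 := by
  simp only [bZ_succ, map_sum, bEps_bC, H.aug, zero_smul, Finset.sum_const_zero]

theorem bB_bZ (H : IsExt e ε) (i : ℕ) (m : Fin n → ℤ) :
    bB (kAct ε) i (bZ k e (i + 1) m) = 0 := by
  induction i generalizing m with
  | zero =>
    rw [bZ_succ, map_sum]
    refine Finset.sum_eq_zero fun a _ => ?_
    rw [bB_zero, kAct_apply, H.aug, zero_mul, map_zero]
  | succ i ih =>
    rw [bZ_succ, map_sum]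
    simp only [bB_succ, ih, map_zero, sub_zero]
    simp only [bZ_succ, map_sum, bMul_succ]
    rw [← Finset.sum_product']
    refine Finset.sum_involution (fun p _ => p.swap) ?_ ?_ ?_ ?_
    · rintro ⟨a, b⟩ _
      simp only [Prod.swap]
      rw [sub_right_comm m, ← LinearMap.add_apply, ← map_add, H.anti, map_zero,
        LinearMap.zero_apply]
    · rintro ⟨a, b⟩ _ h h2
      simp only [Prod.swap, Prod.mk.injEq] at h2
      obtain ⟨rfl, _⟩ := h2
      apply h
      simp only [H.sq, map_zero, LinearMap.zero_apply]
    · simp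
    · simp

theorem bD_bZ (H : IsExt e ε) (i : ℕ) (m : Fin n → ℤ) :
    bD ε (kAct ε) i (bZ k e (i + 1) m) = 0 := by
  rw [bD_apply, bEps_bZ H, bB_bZ H, sub_zero]

theorem bL_bZ (H : IsExt e ε) (i : ℕ) (l : List (Fin n)) (hl : l.length = i) (m : Fin n → ℤ) :
    bL H i l (bZ k e i m) = if m = (fun a => (l.count a : ℤ)) then 1 else 0 := by
  induction i generalizing l m with
  | zero =>
    obtain rfl := List.length_eq_zero_iff.1 hl
    change bOut (if m = 0 then bIn 1 else 0) = _
    have : (fun a : Fin n => ((([] : List (Fin n)).count a : ℕ) : ℤ)) = 0 := by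
      funext a; simp
    rw [this]
    split_ifs <;> simp
  | succ i ih =>
    cases l with
    | nil => simp at hl
    | cons c l =>
      have hl : l.length = i := by simpa using hl
      rw [bZ_succ, map_sum]
      simp only [bL_cons, co_eG, ih l hl]
      simp only [ite_mul, one_mul, zero_mul, Finset.sum_ite_eq', Finset.mem_univ, if_true]
      have : (fun a => ((List.count a (c :: l) : ℕ) : ℤ)) =
          (fun a => (l.count a : ℤ)) + Pi.single c 1 := by
        funext a
        by_cases h : a = c
        · subst h; simp
        · simp [List.count_cons, h, Ne.symm h, Pi.single_apply]
      rw [this]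
      congr 1
      rw [eq_iff_iff, sub_eq_iff_eq_add]

theorem rank_hH_succ (H : IsExt e ε) (i : ℕ) :
    Module.rank k (hH k A ε (i + 1) : Type) = (Nat.multichoose n (i + 1) : Cardinal) := by
  apply le_antisymm
  · obtain ⟨J, hJ, f, hc, h⟩ := Bd_k H (i + 1)
    rw [← hc]
    refine rank_homology_le (hDelta k A ε i) (hDelta k A ε (i + 1))
      (fun j => (f j).comp (bTh k A (i + 1)).symm.toLinearMap) (fun z hz hf => ?_)
    obtain ⟨z, rfl⟩ := (bTh k A (i + 1)).surjective z
    have h1 : bD ε (kAct ε) i z = 0 := by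
      rw [bTh_bD] at hz
      exact (bTh k A i).map_eq_zero_iff.1 hz
    obtain ⟨y, hy⟩ := h z h1 (fun j => by simpa using hf j)
    exact ⟨bTh k A (i + 2) y, by rw [bTh_bD, hy]⟩
  · have hS : Fintype.card (Sym (Fin n) (i + 1)) = Nat.multichoose n (i + 1) := by
      rw [Sym.card_sym_eq_multichoose, Fintype.card_fin]
    rw [← hS]
    refine le_rank_homology (hDelta k A ε i) (hDelta k A ε (i + 1))
      (fun s : Sym (Fin n) (i + 1) =>
        (bL H (i + 1) s.1.toList).comp (bTh k A (i + 1)).symm.toLinearMap)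
      (fun s => bTh k A (i + 1) (bZ k e (i + 1) (fun a => (s.1.count a : ℤ)))) ?_ ?_ ?_
    · intro s
      rw [bTh_bD, bD_bZ H, map_zero]
    · intro s y
      obtain ⟨y, rfl⟩ := (bTh k A (i + 2)).surjective y
      rw [bTh_bD]
      simp [bL_bD]
    · intro s t
      simp only [LinearMap.comp_apply, LinearEquiv.coe_coe, LinearEquiv.symm_apply_apply]
      rw [bL_bZ H _ _ (by rw [Multiset.length_toList]; exact t.2)]
      congr 1
      rw [eq_iff_iff]
      constructor
      · intro h
        apply Subtype.ext
        ext a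
        have := congrFun h a
        rw [← Multiset.coe_count, Multiset.coe_toList] at this
        exact_mod_cast this
      · rintro rfl
        funext a
        rw [← Multiset.coe_count, Multiset.coe_toList]

theorem rank_hH_zero (ε : A →ₐ[k] k) :
    Module.rank k (hH k A ε 0 : Type) = 1 := by
  have h : LinearMap.range (hDelta k A ε 0) = ⊥ := LinearMap.range_zero
  have h2 : ((hW k A 0 : Type) ⧸ LinearMap.range (hDelta k A ε 0)) ≃ₗ[k] k :=
    Submodule.quotEquivOfEqBot _ h
  exact h2.rank_eq.trans (Module.rank_self k)

end Lower
/-- For every `i ≥ 0`,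
`dim_k Tor_i^{E ⊗ E^op}(k, E) = binom(n+i-1, i)`, where `E` is an `E ⊗ E^op`-module
via `(a ⊗ b) · s = a s b`, `k` is an `E ⊗ E^op`-module via the augmentation sending
each `e_i ⊗ 1` and `1 ⊗ e_i` to `0`, and the Tor group is realized as the `i`-th
homology of the standard complex `(E^{⊗ •}, δ)` computing the Hochschild homology of
`E` with coefficients in `k`.  (Equivalently, the Hilbert series
`∑ dim_k Tor_i^{E ⊗ E^op}(k,E) tⁱ` equals `1/(1-t)^n`, the Hilbert series of the
commutative polynomial ring in `n` variables.) -/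
theorem exterior_hochschild_homology_rank (k : Type) [Field k] (n : ℕ) (hn : 1 ≤ n) :
    ∀ i : ℕ,
      Module.rank k (hH k (ExtAlg k n) (extAug k n) i : Type) =
        ((n + i - 1).choose i : Cardinal) := by
  intro i
  cases i with
  | zero => rw [rank_hH_zero]; simp
  | succ i => rw [rank_hH_succ isExt_extAlg, Nat.multichoose_eq]

end
end

section
/- For every i ≥ 0, dim_k Tor_i^{A ⊗_k A}(k, A) = Σ_{r,m ≥ 0 with r+2m=i} binom(n, r)·binom(s+m−1, m); equivalently, the Hilbert series Σ_{i≥0} dim_k Tor_i^{A⊗_k A}(k,A)·t^i of the Hochschild homology of A with coefficients in k equals (1+t)^n / (1−t²)^s. -/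
/-!
**Statement 13**: let `A = k[x_1, …, x_n]/(m_1, …, m_s)` where `m_1, …, m_s` are
pairwise coprime monomials of degree `≥ 2` (a complete intersection of monomials).
Then `dim_k Tor_i^{A ⊗ A}(k, A) = ∑_{r+2m=i} binom(n,r)·binom(s+m-1,m)`; equivalently
the Hilbert series of the Hochschild homology of `A` with coefficients in `k` is
`(1+t)^n / (1-t²)^s`.

We realize `Tor_i^{A ⊗ A}(k, A)` concretely as the `i`-th homology of the complex
`k ⊗_{A ⊗ A} C`, where `C` (`C_i = A^{⊗(i+2)}`) is the acyclic Hochschild complex,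
a free `A ⊗ A`-resolution of `A`; this complex has terms `A^{⊗ i}` and the
differential `hDelta` below, built from the augmentation `ε : A → k`, `x_i ↦ 0`.
-/
open TensorProduct

noncomputable section

section CompleteIntersection

variable (k : Type) [Field k] (n s : ℕ) (α : Fin s → (Fin n →₀ ℕ))

/-- The ideal generated by the monomials `m_j = x^{α j}`, `j = 1, …, s`. -/
def ciIdeal : Ideal (MvPolynomial (Fin n) k) :=
  Ideal.span (Set.range fun j => MvPolynomial.monomial (α j) (1 : k))

/-- The quotient `A = k[x_1, …, x_n] / (m_1, …, m_s)`. -/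
abbrev CIQuot := MvPolynomial (Fin n) k ⧸ ciIdeal k n s α

/-- The augmentation `A → k` sending each `x_i` to `0` (well defined because each
monomial `m_j` has degree `≥ 2`, hence in particular is not constant). -/
def ciAug (hdeg : ∀ j, 2 ≤ (α j).sum fun _ e => e) : CIQuot k n s α →ₐ[k] k :=
  Ideal.Quotient.liftₐ (ciIdeal k n s α)
    (MvPolynomial.aeval fun _ : Fin n => (0 : k))
    (by
      intro a ha
      have hle : ciIdeal k n s α ≤
          RingHom.ker (MvPolynomial.aeval fun _ : Fin n => (0 : k)).toRingHom := by
        rw [ciIdeal, Ideal.span_le]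
        rintro _ ⟨j, rfl⟩
        simp only [SetLike.mem_coe, RingHom.mem_ker, AlgHom.toRingHom_eq_coe,
          RingHom.coe_coe]
        have hne : ∃ i, (α j) i ≠ 0 := by
          by_contra hcon
          push_neg at hcon
          have h0 : α j = 0 := by
            ext i; simp [hcon i]
          have h2 := hdeg j
          rw [h0] at h2
          simp at h2
        obtain ⟨i, hi⟩ := hne
        rw [MvPolynomial.aeval_monomial, Finsupp.prod]
        rw [Finset.prod_eq_zero (Finsupp.mem_support_iff.mpr hi)
          (by simp [zero_pow hi])]
        simp
      exact RingHom.mem_ker.mp (hle ha))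

end CompleteIntersection

namespace HH
open CategoryTheory
section Compare
variable {A : Type} [CommRing A] {Z : Type} [AddCommGroup Z] [Module A Z]

/-- an exact sequence of projectives ending in `Z`. -/
structure IsRes (X : ℕ → Type) [∀ i, AddCommGroup (X i)] [∀ i, Module A (X i)]
    (d : ∀ i, X (i+1) →ₗ[A] X i) (aug : X 0 →ₗ[A] Z) : Prop where
  proj : ∀ i, Module.Projective A (X i)
  dd : ∀ i x, d i (d (i+1) x) = 0
  augd : ∀ x, aug (d 0 x) = 0
  surj : Function.Surjective aug
  exact0 : ∀ x, aug x = 0 → ∃ y, d 0 y = x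
  exact : ∀ i x, d i x = 0 → ∃ y, d (i+1) y = x

variable (X : ℕ → Type) [∀ i, AddCommGroup (X i)] [∀ i, Module A (X i)]
    (d : ∀ i, X (i+1) →ₗ[A] X i) (aug : X 0 →ₗ[A] Z)

/-- The chain complex. -/
noncomputable def cplx (h : IsRes X d aug) : ChainComplex (ModuleCat.{0} A) ℕ :=
  ChainComplex.of (fun i => ModuleCat.of A (X i)) (fun i => ModuleCat.ofHom (d i))
    (fun i => by ext x; exact h.dd i x)

lemma cplx_d (h : IsRes X d aug) (i : ℕ) :
    (cplx X d aug h).d (i+1) i = ModuleCat.ofHom (d i) := by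
  unfold cplx
  exact ChainComplex.of_d (fun i => ModuleCat.of A (X i)) (fun i => ModuleCat.ofHom (d i)) i

/-- The projective resolution. -/
noncomputable def res (h : IsRes X d aug) :
    ProjectiveResolution (ModuleCat.of A Z) where
  complex := cplx X d aug h
  projective := fun i => by
    have := h.proj i
    exact (IsProjective.iff_projective (X i)).1 this
  π := (ChainComplex.toSingle₀Equiv _ _).symm ⟨ModuleCat.ofHom aug, by
      rw [cplx_d]; ext x; exact h.augd x⟩
  quasiIso := ⟨fun n => by
    cases n with
    | zero =>
      rw [ChainComplex.quasiIsoAt₀_iff, ShortComplex.quasiIso_iff_of_zeros']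
      · let S : ShortComplex (ModuleCat A) := ShortComplex.mk (ModuleCat.ofHom (d 0)) (ModuleCat.ofHom aug)
          (by ext x; exact h.augd x)
        have hS : S.Exact ∧ Epi S.g := by
          refine ⟨?_, ?_⟩
          · rw [ShortComplex.moduleCat_exact_iff]
            exact h.exact0
          · rw [ModuleCat.epi_iff_surjective]
            exact h.surj
        refine (ShortComplex.exact_and_epi_g_iff_of_iso (S₂ := S) ?_).2 hS
        refine ShortComplex.isoMk (Iso.refl _) (Iso.refl _) (Iso.refl _)
          ?_ ?_
        · simp [S]; exact (cplx_d X d aug h 0).symm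
        · simp [S]; rfl
      all_goals rfl
    | succ n =>
      rw [quasiIsoAt_iff_exactAt']
      · rw [HomologicalComplex.exactAt_iff' _ (n + 1 + 1) (n + 1) n (by simp) (by simp)]
        rw [ShortComplex.moduleCat_exact_iff]
        intro x hx
        have hx' : (cplx X d aug h).d (n+1) n x = 0 := hx
        rw [cplx_d] at hx'
        obtain ⟨y, hy⟩ := h.exact n x hx'
        refine ⟨y, ?_⟩
        change (cplx X d aug h).d (n+1+1) (n+1) y = x
        rw [cplx_d]
        exact hy
      · apply ChainComplex.exactAt_succ_single_obj⟩

variable {X d aug} in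
lemma compare {Y : ℕ → Type} [∀ i, AddCommGroup (Y i)] [∀ i, Module A (Y i)]
    {dY : ∀ i, Y (i+1) →ₗ[A] Y i} {augY : Y 0 →ₗ[A] Z}
    (hX : IsRes X d aug) (hY : IsRes Y dY augY) :
    ∃ (φ : ∀ i, X i →ₗ[A] Y i) (ψ : ∀ i, Y i →ₗ[A] X i)
      (h : ∀ i, X i →ₗ[A] X (i+1)) (h' : ∀ i, Y i →ₗ[A] Y (i+1)),
      (∀ i x, φ i (d i x) = dY i (φ (i+1) x)) ∧
      (∀ i y, ψ i (dY i y) = d i (ψ (i+1) y)) ∧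
      (∀ i x, ψ (i+1) (φ (i+1) x) = h i (d i x) + d (i+1) (h (i+1) x) + x) ∧
      (∀ i y, φ (i+1) (ψ (i+1) y) = h' i (dY i y) + dY (i+1) (h' (i+1) y) + y) := by
  let e := ProjectiveResolution.homotopyEquiv (res X d aug hX) (res Y dY augY hY)
  have e1 := e.hom.comm
  have e2 := e.inv.comm
  have e3 := e.homotopyHomInvId
  have e4 := e.homotopyInvHomId
  have c1 : ∀ i, (res X d aug hX).complex.d (i+1) i = ModuleCat.ofHom (d i) := cplx_d X d aug hX
  have c2 : ∀ i, (res Y dY augY hY).complex.d (i+1) i = ModuleCat.ofHom (dY i) :=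
    cplx_d Y dY augY hY
  refine ⟨fun i => (e.hom.f i).hom, fun i => (e.inv.f i).hom, fun i => (e3.hom i (i+1)).hom,
    fun i => (e4.hom i (i+1)).hom, ?_, ?_, ?_, ?_⟩
  · intro i x
    have := e1 (i+1) i
    rw [c1, c2] at this
    exact (congrArg (fun f => f.hom x) this).symm
  · intro i x
    have := e2 (i+1) i
    rw [c1, c2] at this
    exact (congrArg (fun f => f.hom x) this).symm
  · intro i x
    have := e3.comm (i+1)
    rw [Homotopy.prevD_chainComplex, Homotopy.dNext_succ_chainComplex, c1, c1] at this
    exact (congrArg (fun f => f.hom x) this)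
  · intro i x
    have := e4.comm (i+1)
    rw [Homotopy.prevD_chainComplex, Homotopy.dNext_succ_chainComplex, c2, c2] at this
    exact (congrArg (fun f => f.hom x) this)
end Compare
end HH
namespace HH
section Bar
variable (k : Type) [Field k] (A : Type) [CommRing A] [Algebra k A]
variable (ε : A →ₐ[k] k)

/-- bar terms -/
abbrev BB (i : ℕ) : Type := A ⊗[k] (hW k A i : Type)

/-- the (definitional) identification of `hW (i+1)` with `A ⊗ hW i`. -/
def toW (i : ℕ) : BB k A i ≃ₗ[k] (hW k A (i+1) : Type) := LinearEquiv.refl k (BB k A i)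

/-- The differential with source written as `A ⊗ hW i`. -/
def dl (i : ℕ) : BB k A i →ₗ[k] (hW k A i : Type) := (hDelta k A ε i).comp (toW k A i).toLinearMap

lemma hEps_tmul (i : ℕ) (a : A) (x : (hW k A i : Type)) :
    hEps k A ε i (a ⊗ₜ[k] x) = ε a • x := by
  simp [hEps]

lemma hEps_smul (i : ℕ) (a : A) (y : BB k A i) :
    hEps k A ε i (a • y) = ε a • hEps k A ε i y := by
  induction y using TensorProduct.induction_on with
  | zero => simp
  | tmul b x => rw [TensorProduct.smul_tmul', hEps_tmul, hEps_tmul, smul_smul, smul_eq_mul, map_mul]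
  | add x y hx hy => rw [smul_add, map_add, map_add, hx, hy, smul_add]

/-- `ρ x = x - 1 ⊗ ε x + 1 ⊗ δ x`. -/
def rho (i : ℕ) : BB k A i →ₗ[k] BB k A i :=
  LinearMap.id - (TensorProduct.mk k A (hW k A i : Type) 1).comp (hEps k A ε i) +
    (TensorProduct.mk k A (hW k A i : Type) 1).comp (dl k A ε i)

/-- bar differential -/
def bd (i : ℕ) : BB k A (i+1) →ₗ[A] BB k A i :=
  LinearMap.liftBaseChange A ((rho k A ε i).comp (toW k A i).symm.toLinearMap)

lemma bd_tmul (i : ℕ) (a : A) (y : BB k A i) :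
    bd k A ε i (a ⊗ₜ[k] (toW k A i y)) =
      a • (y - (1:A) ⊗ₜ[k] hEps k A ε i y + (1:A) ⊗ₜ[k] dl k A ε i y) := by
  simp [bd, rho]

lemma BB_ind (i : ℕ) {p : BB k A (i+1) → Prop} (h0 : p 0) (ha : ∀ x y, p x → p y → p (x+y))
    (ht : ∀ a (y : BB k A i), p (a ⊗ₜ[k] (toW k A i y))) (y) : p y := by
  induction y using TensorProduct.induction_on with
  | zero => exact h0
  | add x y hx hy => exact ha _ _ hx hy
  | tmul a x => exact ht a ((toW k A i).symm x)

lemma dl_succ (i : ℕ) (y : BB k A (i+1)) :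
    dl k A ε (i+1) y = hEps k A ε (i+1) y - toW k A i (bd k A ε i y) := by
  induction y using BB_ind with
  | h0 => simp
  | ha x y hx hy =>
    rw [map_add, hx, hy, map_add, map_add, map_add]
    abel
  | ht a x =>
    rw [bd_tmul]
    have h1 : ∀ x : BB k A i, (TensorProduct.map (LinearMap.mul' k A) LinearMap.id)
          ((TensorProduct.assoc k A A (hW k A i)).symm (a ⊗ₜ[k] x)) = a • x := by
      intro x
      induction x using TensorProduct.induction_on with
      | zero => simp
      | add x y hx hy => rw [TensorProduct.tmul_add, map_add, map_add, hx, hy, smul_add]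
      | tmul b x => simp [TensorProduct.smul_tmul']
    have h2 : dl k A ε (i+1) (a ⊗ₜ[k] (toW k A i x)) = hEps k A ε (i+1) (a ⊗ₜ[k] (toW k A i x)) -
      toW k A i ((TensorProduct.map (LinearMap.mul' k A) LinearMap.id)
          ((TensorProduct.assoc k A A (hW k A i)).symm (a ⊗ₜ[k] x))) -
        toW k A i (a ⊗ₜ[k] (dl k A ε i x)) + toW k A i (a ⊗ₜ[k] (hEps k A ε i x)) := rfl
    rw [h2, h1]
    rw [smul_add, smul_sub, TensorProduct.smul_tmul', TensorProduct.smul_tmul', smul_eq_mul, mul_one,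
      map_add, map_sub]
    abel

lemma dl_zero (y : BB k A 0) : dl k A ε 0 y = 0 := rfl

lemma bd_one_tmul_succ (i : ℕ) (y : BB k A (i+1)) :
    bd k A ε (i+1) ((1:A) ⊗ₜ[k] (toW k A (i+1) y)) =
      y - (1:A) ⊗ₜ[k] (toW k A i (bd k A ε i y)) := by
  rw [bd_tmul, dl_succ, one_smul, TensorProduct.tmul_sub]
  abel

lemma bd_one_tmul_zero (y : BB k A 0) :
    bd k A ε 0 ((1:A) ⊗ₜ[k] (toW k A 0 y)) = y - (1:A) ⊗ₜ[k] hEps k A ε 0 y := by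
  rw [bd_tmul, one_smul, dl_zero, TensorProduct.tmul_zero, add_zero]

lemma hEps_bd (i : ℕ) (y : BB k A (i+1)) :
    hEps k A ε i (bd k A ε i y) = dl k A ε i ((toW k A i).symm (hEps k A ε (i+1) y)) := by
  induction y using BB_ind with
  | h0 => simp
  | ha x y hx hy => simp only [map_add, hx, hy]
  | ht a x =>
    rw [bd_tmul, hEps_smul, hEps_tmul, map_smul, map_smul, LinearEquiv.symm_apply_apply,
      map_add, map_sub, hEps_tmul, hEps_tmul]
    simp

lemma BB_ext {M : Type} [AddCommGroup M] [Module A M] (i : ℕ)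
    (f g : BB k A i →ₗ[A] M) (h : ∀ x, f ((1:A) ⊗ₜ[k] x) = g ((1:A) ⊗ₜ[k] x)) (y : BB k A i) :
    f y = g y := by
  induction y using TensorProduct.induction_on with
  | zero => simp
  | add x y hx hy => rw [map_add, map_add, hx, hy]
  | tmul a x =>
    have : a ⊗ₜ[k] x = a • ((1:A) ⊗ₜ[k] x) := by
      rw [TensorProduct.smul_tmul', smul_eq_mul, mul_one]
    rw [this, map_smul, map_smul, h]

lemma bd_bd (i : ℕ) (y : BB k A (i+2)) : bd k A ε i (bd k A ε (i+1) y) = 0 := by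
  induction i with
  | zero =>
    refine BB_ext k A 2 ((bd k A ε 0).comp (bd k A ε 1)) 0 (fun x => ?_) y
    obtain ⟨x, rfl⟩ := (toW k A 1).surjective x
    rw [LinearMap.comp_apply, bd_one_tmul_succ k A ε 0 x, map_sub, bd_one_tmul_zero, hEps_bd,
      dl_zero]
    simp
  | succ i ih =>
    refine BB_ext k A (i+3) ((bd k A ε (i+1)).comp (bd k A ε (i+2))) 0 (fun x => ?_) y
    obtain ⟨x, rfl⟩ := (toW k A (i+2)).surjective x
    rw [LinearMap.comp_apply, bd_one_tmul_succ k A ε (i+1) x, map_sub, bd_one_tmul_succ k A ε i, ih]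
    simp

variable [Module A k]
/-- the augmentation -/
def baug (hε : ∀ (a : A) (c : k), a • c = ε a * c) : BB k A 0 →ₗ[A] k where
  toFun y := (hEps k A ε 0 y : (hW k A 0 : Type))
  map_add' := map_add _
  map_smul' a y := by
    rw [hEps_smul]; exact (hε _ _).symm

lemma bar_isRes (hε : ∀ (a : A) (c : k), a • c = ε a * c) :
    IsRes (A := A) (Z := k) (BB k A) (bd k A ε) (baug k A ε hε) where
  proj i := inferInstance
  dd i x := bd_bd k A ε i x
  augd x := by
    change hEps k A ε 0 _ = 0
    rw [hEps_bd]; rfl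
  surj := by
    have : ∀ c : (hW k A 0 : Type), ∃ y, hEps k A ε 0 y = c := fun c => 
      ⟨(1:A) ⊗ₜ[k] c, by rw [hEps_tmul, map_one, one_smul]⟩
    exact this
  exact0 x hx := ⟨(1:A) ⊗ₜ[k] (toW k A 0 x), by
    rw [bd_one_tmul_zero]
    have : hEps k A ε 0 x = 0 := hx
    rw [this]; simp⟩
  exact i x hx := ⟨(1:A) ⊗ₜ[k] (toW k A _ x), by
    rw [bd_one_tmul_succ, hx]; simp⟩

end Bar
end HH
namespace HH
section Cmp
variable (k : Type) [Field k] (A : Type) [CommRing A] [Algebra k A]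
variable (ε : A →ₐ[k] k)

lemma aug_zero {ι : Type} [Finite ι] {M : Type} [AddCommGroup M] [Module A M]
    {N : Type} [AddCommGroup N] (E : M →+ N)
    (hE : ∀ (a : A) m, ε a = 0 → E (a • m) = 0) (f : (ι → A) →ₗ[A] M) (p : ι → A)
    (hp : ∀ c, ε (p c) = 0) : E (f p) = 0 := by
  classical
  have := Fintype.ofFinite ι
  have h1 : p = ∑ c, p c • (Pi.single c (1:A) : ι → A) := by
    ext c
    simp [Finset.sum_apply, Pi.single_apply]
  rw [h1, map_sum, map_sum]
  exact Finset.sum_eq_zero (fun c _ => by rw [map_smul]; exact hE _ _ (hp c))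

lemma rank_hH_zero : Module.rank k (hH k A ε 0 : Type) = 1 := by
  have h : LinearMap.range (hDelta k A ε 0) = ⊥ := LinearMap.range_zero
  have e : (hH k A ε 0 : Type) ≃ₗ[k] (hW k A 0 : Type) := Submodule.quotEquivOfEqBot _ h
  rw [e.rank_eq]
  exact Module.rank_self k

variable [Module A k]

lemma rank_hH_succ (hε : ∀ (a : A) (c : k), a • c = ε a * c)
    (ι : ℕ → Type) [∀ i, Finite (ι i)]
    (d : ∀ i, (ι (i+1) → A) →ₗ[A] (ι i → A)) (aug : (ι 0 → A) →ₗ[A] k)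
    (hP : IsRes (A := A) (Z := k) (fun i => ι i → A) d aug)
    (hmin : ∀ i x c, ε (d i x c) = 0) (i : ℕ) :
    Module.rank k (hH k A ε (i+1) : Type) = Nat.card (ι (i+1)) := by
  obtain ⟨φ, ψ, h, h', hφ, hψ, hψφ, hφψ⟩ := compare hP (bar_isRes k A ε hε)
  have := Fintype.ofFinite (ι (i+1))
  -- reduced maps
  let E : ∀ i, (ι i → A) →ₗ[k] (ι i → k) := fun i =>
    LinearMap.compLeft ε.toLinearMap (ι i)
  have hE : ∀ i p c, E i p c = ε (p c) := fun i p c => rfl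
  let G : ∀ i, (ι i → k) →ₗ[k] (ι i → A) := fun i =>
    LinearMap.compLeft (Algebra.linearMap k A) (ι i)
  have hEG : ∀ i v, E i (G i v) = v := by
    intro i v
    funext c
    change ε (algebraMap k A (v c)) = v c
    simp
  let ψb : (hW k A (i+1) : Type) →ₗ[k] (ι (i+1) → k) :=
    (E (i+1)).comp (((ψ (i+1)).restrictScalars k).comp (TensorProduct.mk k A _ 1))
  let φb : (ι (i+1) → k) →ₗ[k] (hW k A (i+1) : Type) :=
    (hEps k A ε (i+1)).comp (((φ (i+1)).restrictScalars k).comp (G (i+1)))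
  have hψb : ∀ y, E (i+1) (ψ (i+1) y) = ψb (hEps k A ε (i+1) y) := by
    intro y
    induction y using TensorProduct.induction_on with
    | zero => simp
    | add x y hx hy => simp only [map_add, hx, hy]
    | tmul a x =>
      rw [hEps_tmul, map_smul]
      have : a ⊗ₜ[k] x = a • ((1:A) ⊗ₜ[k] x) := by
        rw [TensorProduct.smul_tmul', smul_eq_mul, mul_one]
      rw [this, map_smul]
      funext c
      change ε (a * _) = ε a * _
      rw [map_mul]
      rfl
  have hepsdiff : ∀ p : ι (i+1) → A, ∀ c, ε ((p - G (i+1) (E (i+1) p)) c) = 0 := by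
    intro p c
    change ε (p c - algebraMap k A (ε (p c))) = 0
    simp
  have hφb : ∀ p, hEps k A ε (i+1) (φ (i+1) p) = φb (E (i+1) p) := by
    intro p
    have h0 := aug_zero k A ε (hEps k A ε (i+1)).toAddMonoidHom
      (fun a m ha => by
        change hEps k A ε (i+1) (a • m) = 0
        rw [hEps_smul, ha, zero_smul]) (φ (i+1)) _ (hepsdiff p)
    rw [map_sub, map_sub, sub_eq_zero] at h0
    exact h0
  have A1 : ∀ y, ψb (dl k A ε (i+1) y) = 0 := by
    intro y
    have h1 : dl k A ε (i+1) y = hEps k A ε (i+1) (bd k A ε (i+1) ((1:A) ⊗ₜ[k] (toW k A (i+1) y))) := by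
      rw [hEps_bd, hEps_tmul]; simp
    rw [h1, ← hψb, hψ]
    funext c
    exact hmin _ _ _
  have A2 : ∀ v, dl k A ε i ((toW k A i).symm (φb v)) = 0 := by
    intro v
    have h1 : dl k A ε i ((toW k A i).symm (φb v)) = hEps k A ε i (bd k A ε i (φ (i+1) (G (i+1) v))) := by
      rw [hEps_bd]; rfl
    rw [h1, ← hφ]
    exact aug_zero k A ε (hEps k A ε i).toAddMonoidHom
      (fun a m ha => by
        change hEps k A ε i (a • m) = 0
        rw [hEps_smul, ha, zero_smul]) (φ i) _ (hmin _ _)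
  have A3 : ∀ v, ψb (φb v) = v := by
    intro v
    have h1 : ψb (φb v) = E (i+1) (ψ (i+1) (φ (i+1) (G (i+1) v))) := by rw [hψb]; rfl
    rw [h1, hψφ, map_add, map_add, hEG]
    have h2 : E (i+1) (h i (d i (G (i+1) v))) = 0 :=
      aug_zero k A ε (E (i+1)).toAddMonoidHom (fun a m ha => by
        funext c
        change ε (a * _) = 0
        rw [map_mul, ha, zero_mul]) (h i) _ (hmin _ _)
    have h3 : E (i+1) (d (i+1) (h (i+1) (G (i+1) v))) = 0 := by
      funext c; exact hmin _ _ _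
    rw [h2, h3, zero_add, zero_add]
  have A4 : ∀ x, dl k A ε i ((toW k A i).symm x) = 0 →
      ∃ y, φb (ψb x) = dl k A ε (i+1) y + x := by
    intro x hx
    have h1 : φb (ψb x) = hEps k A ε (i+1) (φ (i+1) (ψ (i+1) ((1:A) ⊗ₜ[k] x))) := by
      rw [hφb]; rfl
    have h2 : hEps k A ε (i+1) ((1:A) ⊗ₜ[k] x) = x := by rw [hEps_tmul]; simp
    have h3 : hEps k A ε (i+1) (h' i (bd k A ε i ((1:A) ⊗ₜ[k] x))) = 0 := by
      have key : ∀ y : BB k A i, hEps k A ε i y = 0 → hEps k A ε (i+1) (h' i y) = 0 := by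
        have gen : ∀ y : BB k A i, hEps k A ε (i+1) (h' i y) =
            hEps k A ε (i+1) (h' i ((1:A) ⊗ₜ[k] hEps k A ε i y)) := by
          intro y
          induction y using TensorProduct.induction_on with
          | zero => simp
          | add x y hx hy => simp only [map_add, TensorProduct.tmul_add, hx, hy]
          | tmul a x =>
            have h5 : a ⊗ₜ[k] x = a • ((1:A) ⊗ₜ[k] x) := by
              rw [TensorProduct.smul_tmul', smul_eq_mul, mul_one]
            have h6 : (1:A) ⊗ₜ[k] (ε a • x) = algebraMap k A (ε a) • ((1:A) ⊗ₜ[k] x) := by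
              rw [TensorProduct.tmul_smul, algebraMap_smul]
            rw [hEps_tmul, h6, h5, (h' i).map_smul, (h' i).map_smul, hEps_smul, hEps_smul]
            simp
        intro y hy
        rw [gen, hy]; simp
      apply key
      rw [hEps_bd, h2, hx]
    rw [h1, hφψ, map_add, map_add, h3, h2, hEps_bd, zero_add]
    exact ⟨_, rfl⟩
  let Θ : LinearMap.ker (hDelta k A ε i) →ₗ[k] (ι (i+1) → k) := ψb.comp (Submodule.subtype _)
  have hsurj : Function.Surjective Θ := fun v => ⟨⟨φb v, A2 v⟩, A3 v⟩
  have hker : (Submodule.comap (LinearMap.ker (hDelta k A ε i)).subtype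
          (LinearMap.range (hDelta k A ε (i + 1)))) = LinearMap.ker Θ := by
    ext ⟨x, hx⟩
    simp only [Submodule.mem_comap, LinearMap.mem_range, LinearMap.mem_ker]
    constructor
    · rintro ⟨y, hy⟩
      change ψb x = 0
      have hy' : hDelta k A ε (i+1) y = x := hy
      rw [← hy']
      exact A1 ((toW k A (i+1)).symm y)
    · intro hx0
      have hx0' : ψb x = 0 := hx0
      obtain ⟨y, hy⟩ := A4 x hx
      rw [hx0', map_zero] at hy
      refine ⟨toW k A (i+1) (-y), ?_⟩
      change dl k A ε (i+1) (-y) = x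
      rw [map_neg]
      exact neg_eq_of_add_eq_zero_right hy.symm
  have e : (hH k A ε (i+1) : Type) ≃ₗ[k] (ι (i+1) → k) :=
    (Submodule.quotEquivOfEq _ _ hker).trans (LinearMap.quotKerEquivOfSurjective Θ hsurj)
  rw [e.rank_eq, rank_fun', Nat.card_eq_fintype_card]

end Cmp
end HH
namespace HH
section Ops
variable {n s : ℕ} (R : Type) [CommRing R]

/-- index set of the Tate basis -/
abbrev Idx (n s : ℕ) : Type := Finset (Fin n) × (Fin s →₀ ℕ)

/-- Koszul sign -/
def sg (i : Fin n) (F : Finset (Fin n)) : R := (-1) ^ (F.filter (· < i)).card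

lemma sg_insert (i l : Fin n) (F : Finset (Fin n)) (h : l ∉ F) :
    sg R i (insert l F) = (if l < i then -1 else 1) * sg R i F := by
  unfold sg
  rw [Finset.filter_insert]
  split_ifs with h1
  · rw [Finset.card_insert_of_notMem (by simp [h]), pow_succ]; ring
  · simp

lemma sg_erase (i l : Fin n) (F : Finset (Fin n)) (h : l ∈ F) :
    sg R i (F.erase l) = (if l < i then -1 else 1) * sg R i F := by
  have := sg_insert R i l (F.erase l) (by simp)
  rw [Finset.insert_erase h] at this
  rw [this, ← mul_assoc]
  split_ifs <;> simp

lemma sg_sq (i : Fin n) (F : Finset (Fin n)) : sg R i F * sg R i F = 1 := by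
  unfold sg
  rw [← mul_pow]; simp

/-- contraction -/
def pd (i : Fin n) : Module.End R (Idx n s → R) where
  toFun z p := if i ∈ p.1 then 0 else sg R i p.1 * z (insert i p.1, p.2)
  map_add' x y := by ext p; simp only [Pi.add_apply]; split_ifs <;> ring
  map_smul' a y := by
    ext p; simp only [Pi.smul_apply, RingHom.id_apply, smul_eq_mul]; split_ifs <;> ring

/-- exterior multiplication -/
def ee (i : Fin n) : Module.End R (Idx n s → R) where
  toFun z p := if i ∈ p.1 then sg R i p.1 * z (p.1.erase i, p.2) else 0
  map_add' x y := by ext p; simp only [Pi.add_apply]; split_ifs <;> ring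
  map_smul' a y := by
    ext p; simp only [Pi.smul_apply, RingHom.id_apply, smul_eq_mul]; split_ifs <;> ring

/-- lowering a divided power -/
def tt (j : Fin s) : Module.End R (Idx n s → R) where
  toFun z p := z (p.1, p.2 + Finsupp.single j 1)
  map_add' x y := by ext p; simp
  map_smul' a y := by ext p; simp

/-- raising a divided power -/
def ss (j : Fin s) : Module.End R (Idx n s → R) where
  toFun z p := if p.2 j = 0 then 0 else z (p.1, p.2 - Finsupp.single j 1)
  map_add' x y := by ext p; simp only [Pi.add_apply]; split_ifs <;> ring
  map_smul' a y := by
    ext p; simp only [Pi.smul_apply, RingHom.id_apply, smul_eq_mul]; split_ifs <;> ring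

lemma pd_apply (i : Fin n) (z : Idx n s → R) (F c) :
    pd R i z (F, c) = if i ∈ F then 0 else sg R i F * z (insert i F, c) := rfl
lemma ee_apply (i : Fin n) (z : Idx n s → R) (F c) :
    ee R i z (F, c) = if i ∈ F then sg R i F * z (F.erase i, c) else 0 := rfl
lemma tt_apply (j : Fin s) (z : Idx n s → R) (F c) :
    tt R j z (F, c) = z (F, c + Finsupp.single j 1) := rfl
lemma ss_apply (j : Fin s) (z : Idx n s → R) (F c) :
    ss R j z (F, c) = if c j = 0 then 0 else z (F, c - Finsupp.single j 1) := rfl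

lemma pd_pd_self (i : Fin n) : (pd R i * pd R i : Module.End R (Idx n s → R)) = 0 := by
  refine LinearMap.ext fun z => funext fun ⟨F, c⟩ => ?_
  simp [Module.End.mul_apply, pd_apply]

lemma ee_ee_self (i : Fin n) : (ee R i * ee R i : Module.End R (Idx n s → R)) = 0 := by
  refine LinearMap.ext fun z => funext fun ⟨F, c⟩ => ?_
  simp [Module.End.mul_apply, ee_apply]

lemma pd_pd (i l : Fin n) : (pd R i * pd R l : Module.End R (Idx n s → R)) = - (pd R l * pd R i) := by
  by_cases hil : i = l
  · subst hil; rw [pd_pd_self]; simp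
  refine LinearMap.ext fun z => funext fun ⟨F, c⟩ => ?_
  have hli : ¬ l = i := fun h => hil h.symm
  simp only [Module.End.mul_apply, pd_apply, LinearMap.neg_apply, Pi.neg_apply, Finset.mem_insert,
    hil, hli, false_or]
  by_cases hi : i ∈ F <;> by_cases hl : l ∈ F <;> simp only [hi, hl, if_true, if_false, mul_zero, neg_zero]
  rw [sg_insert R l i F hi, sg_insert R i l F hl, Finset.insert_comm]
  rcases lt_or_gt_of_ne hil with h | h
  · simp only [h, if_true, not_lt_of_gt h, if_false]; ring
  · have h : l < i := h
    simp only [h, if_true, not_lt_of_gt h, if_false]; ring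

lemma ee_ee (i l : Fin n) : (ee R i * ee R l : Module.End R (Idx n s → R)) = - (ee R l * ee R i) := by
  by_cases hil : i = l
  · subst hil; rw [ee_ee_self]; simp
  refine LinearMap.ext fun z => funext fun ⟨F, c⟩ => ?_
  have hli : ¬ l = i := fun h => hil h.symm
  simp only [Module.End.mul_apply, ee_apply, LinearMap.neg_apply, Pi.neg_apply, Finset.mem_erase,
    ne_eq, hil, hli, not_false_eq_true, true_and]
  by_cases hi : i ∈ F <;> by_cases hl : l ∈ F <;> simp only [hi, hl, if_true, if_false, mul_zero, neg_zero]
  rw [sg_erase R l i F hi, sg_erase R i l F hl, Finset.erase_right_comm]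
  rcases lt_or_gt_of_ne hil with h | h
  · simp only [h, if_true, not_lt_of_gt h, if_false]; ring
  · have h : l < i := h
    simp only [h, if_true, not_lt_of_gt h, if_false]; ring

lemma pd_ee_self (i : Fin n) : (pd R i * ee R i + ee R i * pd R i : Module.End R (Idx n s → R)) = 1 := by
  refine LinearMap.ext fun z => funext fun ⟨F, c⟩ => ?_
  simp only [Module.End.mul_apply, pd_apply, ee_apply, LinearMap.add_apply, Pi.add_apply,
    Module.End.one_apply, Finset.mem_insert_self, if_true]
  by_cases hi : i ∈ F
  · simp only [hi, if_true, Finset.notMem_erase, if_false, Finset.insert_erase hi, zero_add,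
      sg_erase R i i F hi, lt_irrefl, one_mul]
    rw [← mul_assoc, sg_sq, one_mul]
  · simp only [hi, if_false, add_zero, sg_insert R i i F hi, lt_irrefl, one_mul,
      Finset.erase_insert hi]
    rw [← mul_assoc, sg_sq, one_mul]

lemma pd_ee (i l : Fin n) (hil : i ≠ l) :
    (pd R i * ee R l + ee R l * pd R i : Module.End R (Idx n s → R)) = 0 := by
  refine LinearMap.ext fun z => funext fun ⟨F, c⟩ => ?_
  have hli : ¬ l = i := fun h => hil h.symm
  simp only [Module.End.mul_apply, pd_apply, ee_apply, LinearMap.add_apply, Pi.add_apply,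
    LinearMap.zero_apply, Pi.zero_apply, Finset.mem_insert, Finset.mem_erase, ne_eq, hil, hli,
    not_false_eq_true, true_and, false_or]
  by_cases hi : i ∈ F <;> by_cases hl : l ∈ F <;> simp only [hi, hl, if_true, if_false, mul_zero, add_zero]
  rw [sg_insert R l i F hi, sg_erase R i l F hl, Finset.erase_insert_of_ne hil]
  rcases lt_or_gt_of_ne hil with h | h
  · simp only [h, if_true, not_lt_of_gt h, if_false]; ring
  · have h : l < i := h
    simp only [h, if_true, not_lt_of_gt h, if_false]; ring

lemma tt_tt (j l : Fin s) : (tt R j * tt R l : Module.End R (Idx n s → R)) = tt R l * tt R j := by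
  refine LinearMap.ext fun z => funext fun ⟨F, c⟩ => ?_
  simp only [Module.End.mul_apply, tt_apply, add_right_comm]
lemma tt_pd (j : Fin s) (i : Fin n) : (tt R j * pd R i : Module.End R (Idx n s → R)) = pd R i * tt R j := rfl
lemma tt_ee (j : Fin s) (i : Fin n) : (tt R j * ee R i : Module.End R (Idx n s → R)) = ee R i * tt R j := rfl
lemma tt_ss_self (j : Fin s) : (tt R j * ss R j : Module.End R (Idx n s → R)) = 1 := by
  refine LinearMap.ext fun z => funext fun ⟨F, c⟩ => ?_
  simp [Module.End.mul_apply, tt_apply, ss_apply]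
lemma tt_ss (j l : Fin s) (h : j ≠ l) : (tt R j * ss R l : Module.End R (Idx n s → R)) = ss R l * tt R j := by
  refine LinearMap.ext fun z => funext fun ⟨F, c⟩ => ?_
  simp only [Module.End.mul_apply, tt_apply, ss_apply]
  have h1 : (c + Finsupp.single j 1 : Fin s →₀ ℕ) l = c l := by simp [h]
  rw [h1]
  split_ifs with h2
  · rfl
  · congr 2
    ext a
    simp only [Finsupp.coe_add, Finsupp.coe_tsub, Pi.add_apply, Pi.sub_apply, Finsupp.single_apply]
    by_cases hla : l = a
    · subst hla; simp [h]
    · simp [hla]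

lemma sum_antisymm {ι M : Type} [Fintype ι] [DecidableEq ι] [AddCommGroup M] (f : ι → ι → M)
    (h0 : ∀ i, f i i = 0) (h1 : ∀ i j, f i j = - f j i) : ∑ i, ∑ j, f i j = 0 := by
  rw [← Finset.sum_product']
  refine Finset.sum_involution (fun p _ => p.swap) ?_ ?_ (by simp) (by simp)
  · rintro ⟨i, j⟩ _
    simp [h1 i j]
  · rintro ⟨i, j⟩ _ hne heq
    apply hne
    have : j = i := congrArg Prod.fst heq
    subst this
    exact h0 _

variable (x : Fin n → R) (g : Fin s → R) (v : Fin s → Fin n)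

/-- Koszul part -/
def dK : Module.End R (Idx n s → R) := ∑ i, x i • pd R i
/-- divided power part -/
def dG : Module.End R (Idx n s → R) := ∑ j, g j • (ee R (v j) * tt R j)
/-- Tate differential -/
def DD : Module.End R (Idx n s → R) := dK R x + dG R g v

lemma dK_sq : (dK R x * dK R x : Module.End R (Idx n s → R)) = 0 := by
  unfold dK
  rw [Finset.sum_mul_sum]
  apply sum_antisymm
  · intro i; rw [smul_mul_smul_comm, pd_pd_self, smul_zero]
  · intro i j; rw [smul_mul_smul_comm, smul_mul_smul_comm, pd_pd, smul_neg, mul_comm]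

lemma dG_sq : (dG R g v * dG R g v : Module.End R (Idx n s → R)) = 0 := by
  have key : ∀ i j : Fin s, (ee R (v i) * tt R i) * (ee R (v j) * tt R j) =
      ((ee R (v i) * ee R (v j)) * (tt R i * tt R j) : Module.End R (Idx n s → R)) := by
    intro i j
    rw [mul_assoc, ← mul_assoc (tt R i), tt_ee, mul_assoc, mul_assoc]
  unfold dG
  rw [Finset.sum_mul_sum]
  apply sum_antisymm
  · intro i; rw [smul_mul_smul_comm, key, ee_ee_self, zero_mul, smul_zero]
  · intro i j
    have hneg : ∀ a b : Module.End R (Idx n s → R), (-a) * b = -(a * b) :=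
      fun a b => LinearMap.ext fun _ => rfl
    rw [smul_mul_smul_comm, smul_mul_smul_comm, key, key, ee_ee, tt_tt, hneg, smul_neg, mul_comm (g i)]

lemma dK_ee (i : Fin n) : (dK R x * ee R i + ee R i * dK R x : Module.End R (Idx n s → R)) = x i • 1 := by
  unfold dK
  rw [Finset.sum_mul, Finset.mul_sum, ← Finset.sum_add_distrib, Finset.sum_eq_single i]
  · rw [smul_mul_assoc, mul_smul_comm, ← smul_add, pd_ee_self]
  · intro l _ hl
    rw [smul_mul_assoc, mul_smul_comm, ← smul_add, pd_ee R l i hl, smul_zero]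
  · simp

lemma dK_tt (j : Fin s) : (dK R x * tt R j : Module.End R (Idx n s → R)) = tt R j * dK R x := by
  unfold dK
  rw [Finset.sum_mul, Finset.mul_sum]
  refine Finset.sum_congr rfl fun i _ => ?_
  rw [smul_mul_assoc, mul_smul_comm, tt_pd]

lemma dG_tt (j : Fin s) : (dG R g v * tt R j : Module.End R (Idx n s → R)) = tt R j * dG R g v := by
  unfold dG
  rw [Finset.sum_mul, Finset.mul_sum]
  refine Finset.sum_congr rfl fun i _ => ?_
  rw [smul_mul_assoc, mul_smul_comm, ← mul_assoc, tt_ee, mul_assoc, mul_assoc, tt_tt]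

lemma dK_pd (i : Fin n) : (dK R x * pd R i : Module.End R (Idx n s → R)) = - (pd R i * dK R x) := by
  unfold dK
  rw [Finset.sum_mul, Finset.mul_sum, ← Finset.sum_neg_distrib]
  refine Finset.sum_congr rfl fun l _ => ?_
  rw [smul_mul_assoc, mul_smul_comm, pd_pd, smul_neg]

lemma DD_tt (j : Fin s) : (DD R x g v * tt R j : Module.End R (Idx n s → R)) = tt R j * DD R x g v := by
  unfold DD
  rw [add_mul, mul_add, dK_tt, dG_tt]

lemma DD_sq : (DD R x g v * DD R x g v : Module.End R (Idx n s → R)) =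
    ∑ j, (x (v j) * g j) • tt R j := by
  unfold DD
  rw [add_mul, mul_add, mul_add, dK_sq, dG_sq, zero_add, add_zero]
  conv_lhs => unfold dG
  rw [Finset.sum_mul, Finset.mul_sum, ← Finset.sum_add_distrib]
  refine Finset.sum_congr rfl fun j _ => ?_
  rw [mul_smul_comm, smul_mul_assoc, ← smul_add, mul_assoc, ← dK_tt, ← mul_assoc, ← mul_assoc,
    ← add_mul, dK_ee, smul_mul_assoc, one_mul, smul_smul, mul_comm]

end Ops
end HH
namespace HH
section Exact
open MvPolynomial

lemma nzd_monomial {k : Type} [Field k] {σ : Type} (T : Set (σ →₀ ℕ)) (β : σ →₀ ℕ)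
    (hT : ∀ a ∈ T, Disjoint a.support β.support) (q : MvPolynomial σ k)
    (hq : monomial β (1:k) * q ∈ Ideal.span ((fun a => monomial a (1:k)) '' T)) :
    q ∈ Ideal.span ((fun a => monomial a (1:k)) '' T) := by
  rw [mem_ideal_span_monomial_image] at hq ⊢
  intro m hm
  have h1 : β + m ∈ (monomial β (1:k) * q).support := by
    rw [mem_support_iff, coeff_monomial_mul, one_mul]
    exact mem_support_iff.1 hm
  obtain ⟨a, ha, hle⟩ := hq _ h1
  refine ⟨a, ha, fun i => ?_⟩
  by_cases hi : i ∈ a.support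
  · have := Finset.disjoint_left.1 (hT a ha) hi
    have h2 : β i = 0 := by simpa using this
    have h3 := hle i
    simpa [h2] using h3
  · have : a i = 0 := by simpa using hi
    rw [this]; exact Nat.zero_le _

variable {n s : ℕ} (R : Type) [CommRing R]

/-- the basis vector in degree zero -/
def dl0 : Idx n s → R := fun p => if p = (∅, 0) then 1 else 0

lemma pd_dl0 (i : Fin n) : pd R i (dl0 R : Idx n s → R) = 0 := by
  funext ⟨F, c⟩
  simp [pd_apply, dl0]

lemma tt_dl0 (j : Fin s) : tt R j (dl0 R : Idx n s → R) = 0 := by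
  funext ⟨F, c⟩
  have : c + Finsupp.single j 1 ≠ 0 := by
    intro h
    have := DFunLike.congr_fun h j
    simp at this
  simp [tt_apply, dl0, this]

lemma eq_dl0 (z : Idx n s → R) (hp : ∀ i, pd R i z = 0) (ht : ∀ j, tt R j z = 0) :
    z = z (∅, 0) • dl0 R := by
  funext ⟨F, c⟩
  by_cases hF : F = ∅
  · by_cases hc : c = 0
    · subst hF; subst hc; simp [dl0]
    · obtain ⟨j, hj⟩ := Finsupp.ne_iff.1 hc
      have := congrFun (ht j) (F, c - Finsupp.single j 1)
      rw [tt_apply] at this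
      rw [tsub_add_cancel_of_le (by
        rw [Finsupp.single_le_iff]; exact Nat.one_le_iff_ne_zero.2 hj)] at this
      rw [this]
      simp [dl0, hc]
  · obtain ⟨i, hi⟩ := Finset.nonempty_iff_ne_empty.2 hF
    have := congrFun (hp i) (F.erase i, c)
    rw [pd_apply, if_neg (by simp), Finset.insert_erase hi] at this
    have h2 : z (F, c) = 0 := by
      have h3 := congrArg (fun y => sg R i (F.erase i) * y) this
      simp only [← mul_assoc, sg_sq] at h3
      simpa using h3
    rw [h2]
    simp [dl0, hF]

variable (x : Fin n → R)

lemma dK_apply (z : Idx n s → R) (p) : dK R x z p = ∑ i, x i * pd R i z p := by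
  simp [dK, LinearMap.sum_apply, Finset.sum_apply]

lemma dK_dl0 : dK R x (dl0 R : Idx n s → R) = 0 := by
  funext p
  rw [dK_apply]
  simp [pd_dl0]

lemma dK_ee_apply (i : Fin n) (z : Idx n s → R) :
    dK R x (ee R i z) = x i • z - ee R i (dK R x z) := by
  have := LinearMap.congr_fun (dK_ee (s := s) R x i) z
  simp only [LinearMap.add_apply, Module.End.mul_apply, LinearMap.smul_apply, Module.End.one_apply] at this
  rw [← this]; abel

lemma pd_ee_apply (i l : Fin n) (z : Idx n s → R) :
    pd R i (ee R l z) = (if i = l then z else 0) - ee R l (pd R i z) := by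
  split_ifs with h
  · subst h
    have := LinearMap.congr_fun (pd_ee_self (s := s) R i) z
    simp only [LinearMap.add_apply, Module.End.mul_apply, Module.End.one_apply] at this
    exact eq_sub_of_add_eq this
  · have := LinearMap.congr_fun (pd_ee (s := s) R i l h) z
    simp only [LinearMap.add_apply, Module.End.mul_apply, LinearMap.zero_apply] at this
    exact eq_sub_of_add_eq this

lemma pd_dK_apply (i : Fin n) (z : Idx n s → R) : pd R i (dK R x z) = - dK R x (pd R i z) := by
  have := LinearMap.congr_fun (dK_pd (s := s) R x i) z
  simp only [Module.End.mul_apply, LinearMap.neg_apply] at this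
  rw [this, neg_neg]

lemma tt_dK_apply (j : Fin s) (z : Idx n s → R) : tt R j (dK R x z) = dK R x (tt R j z) :=
  (LinearMap.congr_fun (dK_tt (s := s) R x j) z).symm

lemma tt_ee_apply (j : Fin s) (i : Fin n) (z : Idx n s → R) :
    tt R j (ee R i z) = ee R i (tt R j z) := rfl

lemma tt_pd_apply (j : Fin s) (i : Fin n) (z : Idx n s → R) :
    tt R j (pd R i z) = pd R i (tt R j z) := rfl

lemma dK_dK_apply (z : Idx n s → R) : dK R x (dK R x z) = 0 :=
  LinearMap.congr_fun (dK_sq (s := s) R x) z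

/-- elements of the ideal generated by some variables are boundaries -/
lemma span_bdry (V : Finset (Fin n)) (q : R) (hq : q ∈ Ideal.span (x '' (V : Set (Fin n)))) :
    ∃ u : Idx n s → R, (∀ l ∉ V, pd R l u = 0) ∧ (∀ j, tt R j u = 0) ∧ dK R x u = q • dl0 R := by
  induction hq using Submodule.span_induction with
  | mem y hy =>
    obtain ⟨i, hi, rfl⟩ := hy
    refine ⟨ee R i (dl0 R), fun l hl => ?_, fun j => ?_, ?_⟩
    · rw [pd_ee_apply, pd_dl0, if_neg (by rintro rfl; exact hl hi)]; simp
    · rw [tt_ee_apply, tt_dl0]; simp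
    · rw [dK_ee_apply, dK_dl0]; simp
  | zero => exact ⟨0, by simp, by simp, by simp⟩
  | add a b _ _ ha hb =>
    obtain ⟨u, h1, h2, h3⟩ := ha
    obtain ⟨u', h1', h2', h3'⟩ := hb
    refine ⟨u + u', fun l hl => ?_, fun j => ?_, ?_⟩
    · rw [map_add, h1 l hl, h1' l hl, add_zero]
    · rw [map_add, h2, h2', add_zero]
    · rw [map_add, h3, h3', add_smul]
  | smul a b _ hb =>
    obtain ⟨u, h1, h2, h3⟩ := hb
    refine ⟨a • u, fun l hl => ?_, fun j => ?_, ?_⟩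
    · rw [map_smul, h1 l hl, smul_zero]
    · rw [map_smul, h2, smul_zero]
    · rw [map_smul, h3, smul_smul, smul_eq_mul]

variable (k : Type) [Field k]

lemma koszul_aux (V : Finset (Fin n)) : ∀ z : Idx n s → MvPolynomial (Fin n) k,
    (∀ l ∉ V, pd _ l z = 0) → (∀ j, tt _ j z = 0) → dK _ X z = 0 →
    ∃ (u : Idx n s → MvPolynomial (Fin n) k) (q : MvPolynomial (Fin n) k),
      (∀ l ∉ V, pd _ l u = 0) ∧ (∀ j, tt _ j u = 0) ∧ z = dK _ X u + q • dl0 _ := by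
  induction V using Finset.induction_on with
  | empty =>
    intro z hz ht hd
    refine ⟨0, z (∅, 0), by simp, by simp, ?_⟩
    rw [map_zero, zero_add]
    exact eq_dl0 _ z (fun i => hz i (by simp)) ht
  | insert i V hi ih =>
    intro z hz ht hd
    obtain ⟨u1, q1, hu1, ht1, hz1⟩ := ih (pd _ i z) (fun l hl => by
      by_cases hli : l = i
      · subst hli; exact LinearMap.congr_fun (pd_pd_self (s := s) _ l) z
      · have := LinearMap.congr_fun (pd_pd (s := s) (MvPolynomial (Fin n) k) l i) z
        simp only [Module.End.mul_apply, LinearMap.neg_apply] at this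
        rw [this, hz l (by simp [hli, hl])]; simp)
      (fun j => by rw [tt_pd_apply, ht]; simp)
      (by have := pd_dK_apply _ X i z; rw [hd, map_zero] at this; exact neg_eq_zero.1 this.symm)
    -- `z` modified
    have hmem : q1 ∈ Ideal.span (X '' (V : Set (Fin n)) : Set (MvPolynomial (Fin n) k)) := by
      let z' := z + dK _ X (ee _ i u1)
      have hz' : dK _ X z' = 0 := by
        simp only [z']; rw [map_add, hd, dK_dK_apply, add_zero]
      have hpz' : pd _ i z' = q1 • dl0 _ := by
        simp only [z']
        rw [map_add, pd_dK_apply, pd_ee_apply, if_pos rfl, hu1 i hi, map_zero, sub_zero, hz1]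
        abel
      have hpz'' : ∀ l ∉ insert i V, pd _ l z' = 0 := by
        intro l hl
        have hli : l ≠ i := by rintro rfl; simp at hl
        simp only [z']
        rw [map_add, hz l hl, pd_dK_apply, pd_ee_apply, if_neg hli, hu1 l (by simp at hl; exact hl.2)]
        simp
      have h0 := congrFun hz' (∅, 0)
      rw [dK_apply, ← Finset.sum_subset (Finset.subset_univ (insert i V)) (fun l _ hl => by
        rw [hpz'' l hl]; simp), Finset.sum_insert hi, hpz'] at h0
      have h1 : X i * q1 = - ∑ l ∈ V, X l * pd _ l z' (∅, 0) := by
        have : (q1 • dl0 (MvPolynomial (Fin n) k) : Idx n s → MvPolynomial (Fin n) k) (∅, 0) = q1 := by simp [dl0]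
        rw [this] at h0
        exact eq_neg_of_add_eq_zero_left h0
      have himg : (X '' (V : Set (Fin n)) : Set (MvPolynomial (Fin n) k)) =
          (fun a => monomial a (1:k)) '' ((fun i => Finsupp.single i 1) '' (V : Set (Fin n))) := by
        rw [Set.image_image]; rfl
      rw [himg]
      apply nzd_monomial _ (Finsupp.single i 1)
      · rintro _ ⟨l, hl, rfl⟩
        rw [Finsupp.support_single _ one_ne_zero, Finsupp.support_single _ one_ne_zero]
        simp only [Finset.disjoint_singleton]
        rintro rfl; exact hi hl
      · rw [← himg]
        change X i * q1 ∈ _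
        rw [h1]
        refine neg_mem (sum_mem fun l hl => ?_)
        exact Ideal.mul_mem_right _ _ (Ideal.subset_span ⟨l, hl, rfl⟩)
    obtain ⟨u2, hu2, ht2, hz2⟩ := span_bdry (s := s) _ X V q1 hmem
    have hpz : pd _ i z = dK _ X (u1 + u2) := by rw [map_add, hz2, hz1]
    have hu : ∀ l ∉ V, pd _ l (u1 + u2) = 0 := fun l hl => by
      rw [map_add, hu1 l hl, hu2 l hl, add_zero]
    have htu : ∀ j, tt _ j (u1 + u2) = 0 := fun j => by rw [map_add, ht1, ht2, add_zero]
    generalize u1 + u2 = w at hpz hu htu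
    have hVi : ∀ l ∉ insert i V, l ≠ i ∧ l ∉ V := by intro l hl; simpa using hl
    obtain ⟨u, q, hu', htu', hfin⟩ := ih (z + dK _ X (ee _ i w)) (fun l hl => by
      rw [map_add, pd_dK_apply, pd_ee_apply, hu l hl, map_zero, sub_zero]
      split_ifs with hli
      · subst hli; rw [hpz]; abel
      · rw [hz l (by simp [hli, hl])]; simp)
      (fun j => by rw [map_add, ht, tt_dK_apply, tt_ee_apply, htu]; simp)
      (by rw [map_add, hd, dK_dK_apply, add_zero])
    refine ⟨u - ee _ i w, q, fun l hl => ?_, fun j => ?_, ?_⟩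
    · rw [map_sub, hu' l (hVi l hl).2, pd_ee_apply, hu l (hVi l hl).2, if_neg (hVi l hl).1]; simp
    · rw [map_sub, htu', tt_ee_apply, htu]; simp
    · rw [map_sub, eq_sub_of_add_eq hfin]; abel

lemma koszul (z : Idx n s → MvPolynomial (Fin n) k)
    (ht : ∀ j, tt _ j z = 0) (hd : dK _ X z = 0) :
    ∃ (u : Idx n s → MvPolynomial (Fin n) k) (a : k),
      (∀ j, tt _ j u = 0) ∧ z = dK _ X u + (C a : MvPolynomial (Fin n) k) • dl0 _ := by
  obtain ⟨u, q, -, hu, h⟩ := koszul_aux k Finset.univ z (by simp) ht hd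
  have hq : q - C (coeff 0 q) ∈ Ideal.span (X '' ((Finset.univ : Finset (Fin n)) : Set (Fin n)) : Set (MvPolynomial (Fin n) k)) := by
    rw [mem_ideal_span_X_image]
    intro m hm
    by_contra hcon
    have hm0 : m = 0 := by
      ext i
      by_contra h1
      exact hcon ⟨i, by simp, h1⟩
    subst hm0
    rw [mem_support_iff] at hm
    simp at hm
  obtain ⟨u2, -, ht2, hz2⟩ := span_bdry (s := s) _ X _ _ hq
  refine ⟨u + u2, coeff 0 q, fun j => by rw [map_add, hu, ht2, add_zero], ?_⟩
  rw [h, map_add, hz2, sub_smul]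
  abel

end Exact
end HH
namespace HH
section Tate
open MvPolynomial

section gen
variable {n s : ℕ} {R : Type} [CommRing R] (x : Fin n → R) (g : Fin s → R) (v : Fin s → Fin n)

lemma DD_apply (z : Idx n s → R) (p) : DD R x g v z p =
    ∑ i, x i * pd R i z p + ∑ j, g j * ee R (v j) (tt R j z) p := by
  simp [DD, dK, dG, LinearMap.sum_apply, Finset.sum_apply]

lemma DD_mem (I : Ideal R) (z : Idx n s → R) (hz : ∀ p, z p ∈ I) (p) : DD R x g v z p ∈ I := by
  obtain ⟨F, c⟩ := p
  rw [DD_apply]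
  refine add_mem (sum_mem fun i _ => Ideal.mul_mem_left _ _ ?_)
    (sum_mem fun j _ => Ideal.mul_mem_left _ _ ?_)
  · rw [pd_apply]; split_ifs
    · exact zero_mem _
    · exact Ideal.mul_mem_left _ _ (hz _)
  · rw [ee_apply]; split_ifs
    · exact Ideal.mul_mem_left _ _ (hz _)
    · exact zero_mem _

lemma DD_mem' (I : Ideal R) (hx : ∀ i, x i ∈ I) (hg : ∀ j, g j ∈ I)
    (z : Idx n s → R) (p) : DD R x g v z p ∈ I := by
  rw [DD_apply]
  exact add_mem (sum_mem fun i _ => Ideal.mul_mem_right _ _ (hx i))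
    (sum_mem fun j _ => Ideal.mul_mem_right _ _ (hg j))

lemma DD_eq_dK (z : Idx n s → R) (hz : ∀ j, tt R j z = 0) : DD R x g v z = dK R x z := by
  funext p
  rw [DD_apply, dK_apply]
  simp [hz]

lemma tt_DD_apply (j : Fin s) (z : Idx n s → R) : tt R j (DD R x g v z) = DD R x g v (tt R j z) :=
  (LinearMap.congr_fun (DD_tt R x g v j) z).symm

lemma DD_DD_apply (z : Idx n s → R) (p) :
    DD R x g v (DD R x g v z) p = ∑ j, (x (v j) * g j) * tt R j z p := by
  have := congrFun (LinearMap.congr_fun (DD_sq R x g v) z) p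
  simpa [LinearMap.sum_apply, Finset.sum_apply] using this

lemma tate_step (I : Ideal R) (J : Finset (Fin s)) (j : Fin s) (hj : j ∉ J)
    (hJI : ∀ l ∈ J, x (v l) * g l ∈ I)
    (hreg : ∀ q, (x (v j) * g j) * q ∈ I → q ∈ I)
    (z : Idx n s → R) (hz : ∀ l ∉ insert j J, tt R l z = 0)
    (hd : ∀ p, DD R x g v z p ∈ I ⊔ Ideal.span {x (v j) * g j}) :
    ∃ (z0 w : Idx n s → R), (∀ l ∉ J, tt R l z0 = 0) ∧ (∀ l ∉ insert j J, tt R l w = 0) ∧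
      (∀ p, DD R x g v z0 p ∈ I) ∧ (∀ p, (z - DD R x g v w - z0) p ∈ I) := by
  classical
  have hw : ∀ p, ∃ r, DD R x g v z p - (x (v j) * g j) * r ∈ I ∧ (DD R x g v z p = 0 → r = 0) := by
    intro p
    by_cases h0 : DD R x g v z p = 0
    · exact ⟨0, by simp [h0], fun _ => rfl⟩
    · obtain ⟨a, ha, b, hb, hab⟩ := Submodule.mem_sup.1 (hd p)
      obtain ⟨r, rfl⟩ := Ideal.mem_span_singleton'.1 hb
      exact ⟨r, by rw [← hab, mul_comm _ r]; simpa using ha, fun h => absurd h h0⟩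
  choose w hw1 hw2 using hw
  have htw : ∀ l ∉ insert j J, tt R l w = 0 := by
    intro l hl
    funext ⟨F, c⟩
    rw [tt_apply]
    apply hw2
    have := congrFun (tt_DD_apply x g v l z) (F, c)
    rw [hz l hl, map_zero, tt_apply] at this
    exact this
  -- square of the differential
  have hsq : ∀ y : Idx n s → R, (∀ l ∉ insert j J, tt R l y = 0) → ∀ p,
      DD R x g v (DD R x g v y) p - (x (v j) * g j) * tt R j y p ∈ I := by
    intro y hy p
    rw [DD_DD_apply, ← Finset.sum_subset (Finset.subset_univ (insert j J)) (fun l _ hl => by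
      rw [hy l hl]; simp), Finset.sum_insert hj, add_sub_cancel_left]
    exact sum_mem fun l hl => Ideal.mul_mem_right _ _ (hJI l hl)
  have h1 : ∀ p, (tt R j z - DD R x g v w) p ∈ I := by
    intro p
    apply hreg
    have h2 := hsq z hz p
    have h3 := DD_mem x g v I (DD R x g v z - (x (v j) * g j) • w) (fun p => hw1 p) p
    rw [map_sub, map_smul] at h3
    have h4 := sub_mem h3 h2
    simp only [Pi.sub_apply, Pi.smul_apply, smul_eq_mul] at h4 ⊢
    convert h4 using 1
    ring
  have hlj : ∀ l ∉ insert j J, l ≠ j := by rintro l hl rfl; simp at hl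
  have htsw : ∀ l ∉ insert j J, tt R l (ss R j w) = 0 := by
    intro l hl
    have := LinearMap.congr_fun (tt_ss (n := n) R l j (hlj l hl)) w
    simp only [Module.End.mul_apply] at this
    rw [this, htw l hl, map_zero]
  have htss : ∀ y : Idx n s → R, tt R j (ss R j y) = y :=
    fun y => LinearMap.congr_fun (tt_ss_self (n := n) R j) y
  let z' := z - DD R x g v (ss R j w)
  have hz't : ∀ l ∉ insert j J, tt R l z' = 0 := by
    intro l hl
    simp only [z']; rw [map_sub, tt_DD_apply, htsw l hl, hz l hl]; simp
  have hz'j : ∀ p, tt R j z' p ∈ I := by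
    intro p
    simp only [z']; rw [map_sub, tt_DD_apply, htss]; exact h1 p
  have hz'd : ∀ p, DD R x g v z' p ∈ I := by
    intro p
    have h5 := hsq (ss R j w) htsw p
    rw [htss] at h5
    have h6 := sub_mem (hw1 p) h5
    simp only [z']
    rw [map_sub, Pi.sub_apply]
    convert h6 using 1
    ring
  have hss : ∀ p, ss R j (tt R j z') p ∈ I := by
    rintro ⟨F, c⟩
    rw [ss_apply]
    split_ifs
    · exact zero_mem _
    · exact hz'j _
  refine ⟨z' - ss R j (tt R j z'), ss R j w, ?_, htsw, ?_, ?_⟩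
  · intro l hl
    by_cases hlj' : l = j
    · subst hlj'; rw [map_sub, htss, sub_self]
    · have hl' : l ∉ insert j J := by simp [hlj', hl]
      have h7 := LinearMap.congr_fun (tt_ss (n := n) R l j hlj') (tt R j z')
      have h8 := LinearMap.congr_fun (tt_tt (n := n) R l j) z'
      simp only [Module.End.mul_apply] at h7 h8
      rw [map_sub, h7, h8, hz't l hl']; simp
  · intro p
    rw [map_sub]
    exact sub_mem (hz'd p) (DD_mem x g v I _ hss p)
  · intro p
    have : z - DD R x g v (ss R j w) - (z' - ss R j (tt R j z')) = ss R j (tt R j z') := by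
      simp only [z']; abel
    rw [this]; exact hss p

end gen

variable {n s : ℕ} (k : Type) [Field k] (α : Fin s → (Fin n →₀ ℕ))

lemma tate_aux (g : Fin s → MvPolynomial (Fin n) k) (v : Fin s → Fin n)
    (hg : ∀ j, X (v j) * g j = monomial (α j) 1)
    (hdisj : ∀ j j' : Fin s, j ≠ j' → Disjoint (α j).support (α j').support)
    (J : Finset (Fin s)) : ∀ z : Idx n s → MvPolynomial (Fin n) k,
    (∀ l ∉ J, tt _ l z = 0) →
    (∀ p, DD _ X g v z p ∈ Ideal.span ((fun a => monomial a (1:k)) '' (α '' (J : Set (Fin s))))) →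
    ∃ (u : Idx n s → MvPolynomial (Fin n) k) (a : k), (∀ l ∉ J, tt _ l u = 0) ∧
      ∀ p, (z - DD _ X g v u - (C a : MvPolynomial (Fin n) k) • dl0 (MvPolynomial (Fin n) k) : Idx n s → MvPolynomial (Fin n) k) p ∈
        Ideal.span ((fun a => monomial a (1:k)) '' (α '' (J : Set (Fin s)))) := by
  classical
  induction J using Finset.induction_on with
  | empty =>
    intro z hz hd
    have hz' : ∀ l, tt _ l z = 0 := fun l => hz l (by simp)
    obtain ⟨u, a, hu, h⟩ := koszul k z hz' (by
      rw [← DD_eq_dK X g v z hz']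
      funext p
      simpa using hd p)
    refine ⟨u, a, fun l _ => hu l, fun p => ?_⟩
    rw [DD_eq_dK X g v u hu, h]
    simp
  | insert j J hj ih =>
    intro z hz hd
    have hI : Ideal.span ((fun a => monomial a (1:k)) '' (α '' ((insert j J : Finset (Fin s)) : Set (Fin s))))
        = Ideal.span ((fun a => monomial a (1:k)) '' (α '' (J : Set (Fin s)))) ⊔
          Ideal.span {X (v j) * g j} := by
      rw [hg, Finset.coe_insert, Set.image_insert_eq, Set.image_insert_eq, Ideal.span_insert, sup_comm]
    rw [hI] at hd ⊢
    obtain ⟨z0, w, h1, h2, h3, h4⟩ := tate_step X g v _ J j hj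
      (fun l hl => by rw [hg]; exact Ideal.subset_span ⟨_, ⟨l, hl, rfl⟩, rfl⟩)
      (fun q hq => by
        rw [hg] at hq
        refine nzd_monomial _ _ ?_ q hq
        rintro _ ⟨l, hl, rfl⟩
        exact hdisj l j (by rintro rfl; exact hj hl)) z hz hd
    obtain ⟨u, a, hu, hfin⟩ := ih z0 h1 h3
    refine ⟨w + u, a, fun l hl => ?_, fun p => ?_⟩
    · rw [map_add, h2 l hl, hu l (by simp at hl; exact hl.2), add_zero]
    · refine Ideal.mem_sup_left ?_
      have := add_mem (h4 p) (hfin p)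
      rw [← Pi.add_apply] at this
      convert this using 1
      simp only [map_add, Pi.sub_apply, Pi.add_apply]; ring

end Tate
end HH
namespace HH
section Final
open MvPolynomial

lemma map_sg {n : ℕ} {R T : Type} [CommRing R] [CommRing T] (f : R →+* T) (i : Fin n) (F) :
    f (sg R i F) = sg T i F := by
  simp [sg]

lemma map_DD {n s : ℕ} {R T : Type} [CommRing R] [CommRing T] (f : R →+* T)
    (x : Fin n → R) (g : Fin s → R) (v : Fin s → Fin n) (z : Idx n s → R) (p) :
    f (DD R x g v z p) = DD T (fun i => f (x i)) (fun j => f (g j)) v (fun q => f (z q)) p := by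
  obtain ⟨F, c⟩ := p
  simp only [DD_apply, map_add, map_sum, map_mul, pd_apply, ee_apply, tt_apply,
    apply_ite f, map_sg, map_zero]

/-- homological degree -/
def dg {n s : ℕ} (p : Idx n s) : ℕ := p.1.card + 2 * p.2.degree

lemma dg_eq_zero {n s : ℕ} (p : Idx n s) : dg p = 0 ↔ p = (∅, 0) := by
  obtain ⟨F, c⟩ := p
  simp [dg, Finsupp.degree_eq_zero_iff]

/-- basis elements of degree `q` -/
abbrev Lv (n s q : ℕ) : Type := {p : Idx n s // dg p = q}

/-- the finset of basis elements of degree `q` -/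
def Tf (n s q : ℕ) : Finset (Idx n s) :=
  (Finset.range (q / 2 + 1)).biUnion fun m =>
    Finset.powersetCard (q - 2 * m) Finset.univ ×ˢ Finset.finsuppAntidiag Finset.univ m

lemma mem_Tf (n s q : ℕ) (p : Idx n s) : p ∈ Tf n s q ↔ dg p = q := by
  obtain ⟨F, c⟩ := p
  have hc : (Finset.univ.sum c) = c.degree := (Finsupp.degree_eq_sum c).symm
  simp only [Tf, Finset.mem_biUnion, Finset.mem_range, Finset.mem_product, Finset.mem_powersetCard,
    Finset.mem_finsuppAntidiag, Finset.subset_univ, true_and, and_true, dg, hc]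
  constructor
  · rintro ⟨m, hm, h1, h2⟩
    omega
  · intro h
    exact ⟨c.degree, by omega, by omega, rfl⟩

instance (n s q : ℕ) : Finite (Lv n s q) := by
  have : Finite {p // p ∈ Tf n s q} := inferInstance
  exact Finite.of_equiv _ (Equiv.subtypeEquivRight (mem_Tf n s q))

lemma card_Lv (n s q : ℕ) : Nat.card (Lv n s q) =
    ∑ m ∈ Finset.range (q / 2 + 1), n.choose (q - 2 * m) * (s + m - 1).choose m := by
  rw [← Nat.card_congr (Equiv.subtypeEquivRight (mem_Tf n s q)), Nat.card_eq_fintype_card,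
    Fintype.card_coe, Tf, Finset.card_biUnion]
  · refine Finset.sum_congr rfl fun m _ => ?_
    rw [Finset.card_product, Finset.card_powersetCard, Finset.card_finsuppAntidiag_nat_eq_choose]
    simp
  · intro a _ b _ hab
    refine Finset.disjoint_left.2 ?_
    rintro ⟨F, c⟩ h1 h2
    simp only [Finset.mem_product, Finset.mem_finsuppAntidiag] at h1 h2
    exact hab (h1.2.1.symm.trans h2.2.1)

section Graded
variable {n s : ℕ} {A : Type} [CommRing A]

/-- extension by zero -/
def xt (q : ℕ) : (Lv n s q → A) →ₗ[A] (Idx n s → A) where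
  toFun z p := if h : dg p = q then z ⟨p, h⟩ else 0
  map_add' a b := by funext p; simp only [Pi.add_apply]; split_ifs <;> simp
  map_smul' a b := by
    funext p; simp only [Pi.smul_apply, RingHom.id_apply]; split_ifs <;> simp

/-- restriction -/
def rs (q : ℕ) : (Idx n s → A) →ₗ[A] (Lv n s q → A) where
  toFun z p := z p.1
  map_add' a b := rfl
  map_smul' a b := rfl

lemma xt_apply (q : ℕ) (z : Lv n s q → A) (p) :
    xt q z p = if h : dg p = q then z ⟨p, h⟩ else 0 := rfl

lemma rs_xt (q : ℕ) (z : Lv n s q → A) : rs q (xt q z) = z := by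
  funext p
  simp [rs, xt, p.2]

variable (x : Fin n → A) (g : Fin s → A) (v : Fin s → Fin n)

lemma DD_local (z z' : Idx n s → A) (p) (h : ∀ r, dg r = dg p + 1 → z r = z' r) :
    DD A x g v z p = DD A x g v z' p := by
  obtain ⟨F, c⟩ := p
  simp only [DD_apply]
  congr 1
  · refine Finset.sum_congr rfl fun i _ => ?_
    rw [pd_apply, pd_apply]
    split_ifs with hi
    · rfl
    · rw [h]
      simp only [dg, Finset.card_insert_of_notMem hi]; omega
  · refine Finset.sum_congr rfl fun j _ => ?_
    rw [ee_apply, ee_apply]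
    split_ifs with hi
    · rw [tt_apply, tt_apply, h]
      have := Finset.card_erase_add_one hi
      simp only [dg, map_add, Finsupp.degree_single]; omega
    · rfl

lemma DD_xt_zero (q : ℕ) (z : Lv n s q → A) (p) (hp : dg p + 1 ≠ q) :
    DD A x g v (xt q z) p = 0 := by
  rw [DD_local x g v _ 0 p, map_zero]; rfl
  intro r hr
  rw [xt_apply, dif_neg (by omega)]; rfl

/-- the differential -/
def dP (q : ℕ) : (Lv n s (q+1) → A) →ₗ[A] (Lv n s q → A) :=
  rs q ∘ₗ DD A x g v ∘ₗ xt (q+1)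

lemma dP_rs (q : ℕ) (z : Idx n s → A) : dP x g v q (rs (q+1) z) = rs q (DD A x g v z) := by
  funext p
  refine DD_local x g v _ _ p.1 fun r hr => ?_
  rw [xt_apply, dif_pos (by rw [hr, p.2])]; rfl

lemma xt_dP (q : ℕ) (z : Lv n s (q+1) → A) : xt q (dP x g v q z) = DD A x g v (xt (q+1) z) := by
  funext p
  rw [xt_apply]
  split_ifs with h
  · rfl
  · rw [DD_xt_zero]; omega

variable (k : Type) [Field k] [Algebra k A] (ε : A →ₐ[k] k) [Module A k]

/-- the augmentation -/
def augP (hε : ∀ (a : A) (c : k), a • c = ε a * c) : (Lv n s 0 → A) →ₗ[A] k where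
  toFun z := ε (z ⟨(∅, 0), by simp [dg]⟩)
  map_add' a b := by simp
  map_smul' a b := by simp [hε]

lemma DD_ker (hx : ∀ i, ε (x i) = 0) (hg : ∀ j, ε (g j) = 0) (z : Idx n s → A) (p) :
    ε (DD A x g v z p) = 0 :=
  DD_mem' x g v (RingHom.ker ε) hx hg z p

lemma tate_isRes (hε : ∀ (a : A) (c : k), a • c = ε a * c)
    (hx : ∀ i, ε (x i) = 0) (hg : ∀ j, ε (g j) = 0) (hxg : ∀ j, x (v j) * g j = 0)
    (hex : ∀ z : Idx n s → A, DD A x g v z = 0 →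
      ∃ (u : Idx n s → A) (a : k), z = DD A x g v u + algebraMap k A a • dl0 A) :
    IsRes (A := A) (Z := k) (fun q => Lv n s q → A) (dP x g v) (augP k ε hε) where
  proj := fun q => by
    have : Module.Free A (Lv n s q → A) := inferInstance
    infer_instance
  dd := fun q z => by
    have : dP x g v (q+1) z = rs (q+1) (DD A x g v (xt (q+2) z)) := rfl
    rw [this, dP_rs]
    funext p
    change DD A x g v (DD A x g v _) p.1 = 0
    rw [DD_DD_apply]
    simp [hxg]
  augd := fun z => DD_ker x g v k ε hx hg _ _
  surj := fun c => ⟨fun _ => algebraMap k A c, by simp [augP]⟩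
  exact0 := fun z hz => by
    obtain ⟨u, a, hu⟩ := hex (xt 0 z) (funext fun p => DD_xt_zero x g v 0 z p (by omega))
    have h0 : a = 0 := by
      have h1 := congrArg ε (congrFun hu (∅, 0))
      have h2 : ε (xt 0 z (∅, 0)) = 0 := by
        rw [xt_apply, dif_pos (by simp [dg])]; exact hz
      rw [h2, Pi.add_apply, map_add, DD_ker x g v k ε hx hg] at h1
      simpa [dl0] using h1.symm
    refine ⟨rs 1 u, ?_⟩
    rw [dP_rs, ← rs_xt 0 z, hu, h0]
    simp
  exact := fun q z hz => by
    obtain ⟨u, a, hu⟩ := hex (xt (q+1) z) (by rw [← xt_dP, hz, map_zero])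
    refine ⟨rs (q+2) u, ?_⟩
    rw [dP_rs, ← rs_xt (q+1) z, hu, map_add]
    have : rs (q+1) (algebraMap k A a • dl0 A : Idx n s → A) = 0 := by
      funext p
      have : p.1 ≠ (∅, 0) := fun h => by
        have h1 := (dg_eq_zero p.1).2 h
        rw [p.2] at h1; omega
      simp [rs, dl0, this]
    rw [this, add_zero]
end Graded

lemma tate_quot {n s : ℕ} (k : Type) [Field k] (α : Fin s → (Fin n →₀ ℕ))
    (g : Fin s → MvPolynomial (Fin n) k) (v : Fin s → Fin n)
    (hg : ∀ j, X (v j) * g j = monomial (α j) 1)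
    (hdisj : ∀ j j' : Fin s, j ≠ j' → Disjoint (α j).support (α j').support)
    (z : Idx n s → CIQuot k n s α)
    (hz : DD (CIQuot k n s α) (fun i => Ideal.Quotient.mk (ciIdeal k n s α) (X i))
      (fun j => Ideal.Quotient.mk (ciIdeal k n s α) (g j)) v z = 0) :
    ∃ (u : Idx n s → CIQuot k n s α) (a : k),
      z = DD (CIQuot k n s α) (fun i => Ideal.Quotient.mk (ciIdeal k n s α) (X i))
        (fun j => Ideal.Quotient.mk (ciIdeal k n s α) (g j)) v u
        + algebraMap k (CIQuot k n s α) a • dl0 (CIQuot k n s α) := by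
  have hI : Ideal.span ((fun a => monomial a (1:k)) '' (α '' ((Finset.univ : Finset (Fin s)) : Set (Fin s))))
      = ciIdeal k n s α := by
    rw [ciIdeal, Finset.coe_univ, Set.image_univ, ← Set.range_comp]; rfl
  choose z' hz' using fun p => Ideal.Quotient.mk_surjective (z p)
  have hzz : (fun p => Ideal.Quotient.mk (ciIdeal k n s α) (z' p)) = z := funext hz'
  obtain ⟨u, a, -, h⟩ := tate_aux k α g v hg hdisj Finset.univ z' (by simp) (fun p => by
    rw [hI, ← Ideal.Quotient.eq_zero_iff_mem, map_DD, hzz, hz]; rfl)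
  refine ⟨fun p => Ideal.Quotient.mk _ (u p), a, funext fun p => ?_⟩
  have h1 := h p
  rw [hI, ← Ideal.Quotient.eq_zero_iff_mem, Pi.sub_apply, Pi.sub_apply, map_sub, map_sub, map_DD,
    hz', sub_sub, sub_eq_zero] at h1
  rw [h1]
  simp only [Pi.add_apply, Pi.smul_apply, smul_eq_mul, map_mul]
  congr 2
  simp only [dl0]
  split_ifs <;> simp

end Final
end HH
/-- Let `m_j = x^{α j}`, `j = 1, …, s`, be monomials of total
degree `≥ 2` with pairwise disjoint supports, and `A = k[x_1, …, x_n]/(m_1, …, m_s)`.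
For every `i ≥ 0`,
`dim_k Tor_i^{A ⊗ A}(k, A) = ∑_{r+2m=i, r,m ≥ 0} binom(n,r)·binom(s+m-1,m)`,
where `A` is an `A ⊗ A`-module via multiplication, `k` is an `A ⊗ A`-module via the
augmentation sending each `x_i ⊗ 1` and `1 ⊗ x_i` to `0`, and the Tor group is
realized as the `i`-th homology of the standard complex `(A^{⊗ •}, δ)` computing the
Hochschild homology of `A` with coefficients in `k`.  (Equivalently, the Hilbert
series `∑ dim_k Tor_i^{A ⊗ A}(k,A) tⁱ` equals `(1+t)^n/(1-t²)^s`.) -/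
theorem complete_intersection_hochschild_homology_rank (k : Type) [Field k] (n s : ℕ)
    (hn : 1 ≤ n) (hs : 1 ≤ s) (α : Fin s → (Fin n →₀ ℕ))
    (hdeg : ∀ j, 2 ≤ (α j).sum fun _ e => e)
    (hdisj : ∀ j j' : Fin s, j ≠ j' → Disjoint (α j).support (α j').support) :
    ∀ i : ℕ,
      Module.rank k (hH k (CIQuot k n s α) (ciAug k n s α hdeg) i : Type) =
        ((∑ m ∈ Finset.range (i / 2 + 1),
            n.choose (i - 2 * m) * (s + m - 1).choose m : ℕ) : Cardinal) := by

  classical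
  have hv : ∀ j, ∃ i, i ∈ (α j).support := fun j => by
    by_contra hcon
    push_neg at hcon
    have h0 : α j = 0 := Finsupp.support_eq_empty.1 (Finset.eq_empty_of_forall_notMem hcon)
    have h2 := hdeg j
    rw [h0] at h2
    simp at h2
  choose v hv using hv
  have hle : ∀ j, Finsupp.single (v j) 1 ≤ α j := fun j => by
    rw [Finsupp.single_le_iff]
    exact Nat.one_le_iff_ne_zero.2 (Finsupp.mem_support_iff.1 (hv j))
  let g : Fin s → MvPolynomial (Fin n) k :=
    fun j => MvPolynomial.monomial (α j - Finsupp.single (v j) 1) 1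
  have hg : ∀ j, MvPolynomial.X (v j) * g j = MvPolynomial.monomial (α j) 1 := fun j => by
    simp only [g, MvPolynomial.X, MvPolynomial.monomial_mul, one_mul]
    rw [add_tsub_cancel_of_le (hle j)]
  let A := CIQuot k n s α
  let ε : A →ₐ[k] k := ciAug k n s α hdeg
  letI : Module A k := Module.compHom k ε.toRingHom
  have hε : ∀ (a : A) (c : k), a • c = ε a * c := fun a c => rfl
  have hεmk : ∀ q, ε (Ideal.Quotient.mk _ q) = MvPolynomial.aeval (fun _ : Fin n => (0 : k)) q :=
    fun q => rfl
  have hx0 : ∀ i, ε (Ideal.Quotient.mk _ (MvPolynomial.X i)) = 0 := fun i => by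
    rw [hεmk]; simp
  have hg0 : ∀ j, ε (Ideal.Quotient.mk _ (g j)) = 0 := fun j => by
    rw [hεmk]
    have hne : α j - Finsupp.single (v j) 1 ≠ 0 := fun h => by
      have h1 : α j = Finsupp.single (v j) 1 :=
        le_antisymm (tsub_eq_zero_iff_le.1 h) (hle j)
      have h2 := hdeg j
      rw [h1] at h2
      simp at h2
    obtain ⟨i, hi⟩ := Finsupp.ne_iff.1 hne
    rw [MvPolynomial.aeval_monomial, Finsupp.prod,
      Finset.prod_eq_zero (Finsupp.mem_support_iff.mpr hi) (zero_pow hi), mul_zero]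
  have hP := HH.tate_isRes (n := n) (s := s) (A := A)
    (fun i => Ideal.Quotient.mk _ (MvPolynomial.X i)) (fun j => Ideal.Quotient.mk _ (g j)) v
    k ε hε hx0 hg0 (fun j => by
      rw [← map_mul, hg, Ideal.Quotient.eq_zero_iff_mem]
      exact Ideal.subset_span ⟨j, rfl⟩)
    (HH.tate_quot k α g v hg hdisj)
  intro i
  cases i with
  | zero =>
    rw [HH.rank_hH_zero]
    simp
  | succ i =>
    rw [← HH.card_Lv]
    exact HH.rank_hH_succ k A ε hε (fun q => HH.Lv n s q) _ _ hP
      (fun q z c => HH.DD_ker _ _ v k ε hx0 hg0 _ _) i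

end
end
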